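/- arXiv:2104.07729 — 3 statements merged into one kernel-verified Lean document; each statement's English description precedes it below -/
import Mathlib

section
/- Let k ≥ 3 be an integer. For all sufficiently large n, if G is an n-vertex W_{2k+1}-free simple graph attaining the maximum spectral radius among all n-vertex W_{2k+1}-free graphs and V(G) = S ⊔ T is a maximum cut of G, then every vertex u ∈ S with d_S(u) = d is adjacent to all but at most d vertices of T (i.e. d_T(u) ≥ |T| − d), and symmetrically every vertex u ∈ T with d_T(u) = d is adjacent to all but at most d vertices of S. -/
/-- The wheel graph on `t` vertices: vertex `0` joined to every vertex of the
cycle `1, 2, …, t-1` (with `t-1` adjacent to `1`). -/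
def wheelGraph (t : ℕ) : SimpleGraph (Fin t) where
  Adj a b := a ≠ b ∧ (a.val = 0 ∨ b.val = 0 ∨ a.val + 1 = b.val ∨ b.val + 1 = a.val ∨
      (a.val = 1 ∧ b.val = t - 1) ∨ (b.val = 1 ∧ a.val = t - 1))
  symm := by
    constructor
    intro a b h
    exact ⟨h.1.symm, by tauto⟩
  loopless := by
    constructor
    intro a h
    exact h.1 rfl

/-- `G` contains a copy of `F`, i.e. a subgraph isomorphic to `F`. -/
def ContainsCopy {α β : Type*} (F : SimpleGraph α) (G : SimpleGraph β) : Prop :=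
  ∃ f : α ↪ β, ∀ a b, F.Adj a b → G.Adj (f a) (f b)

/-- `G` is `W_t`-free: it contains no subgraph isomorphic to the wheel on `t` vertices. -/
def WheelFree (t : ℕ) {n : ℕ} (G : SimpleGraph (Fin n)) : Prop :=
  ¬ ContainsCopy (wheelGraph t) G

/-- The spectral radius of `G`: the largest eigenvalue of its adjacency matrix. -/
noncomputable def lam1 {n : ℕ} (G : SimpleGraph (Fin n)) : ℝ := by
  classical
  exact sSup {μ : ℝ | Module.End.HasEigenvalue (Matrix.toLin' (G.adjMatrix ℝ)) μ}

/-- The number of edges of a graph on a finite vertex type. -/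
noncomputable def edgeCount {V : Type*} [Fintype V] (G : SimpleGraph V) : ℕ := by
  classical
  exact G.edgeFinset.card

/-- The degree of a vertex. -/
noncomputable def deg {n : ℕ} (G : SimpleGraph (Fin n)) (v : Fin n) : ℕ := by
  classical
  exact G.degree v

/-- The number of neighbours of `v` inside the set `A`. -/
noncomputable def degIn {n : ℕ} (G : SimpleGraph (Fin n)) (A : Finset (Fin n)) (v : Fin n) : ℕ := by
  classical
  exact (A.filter fun u => G.Adj v u).card

/-- The number of edges of `G` with one endpoint in `S` and the other outside `S`. -/
noncomputable def cutCount {n : ℕ} (G : SimpleGraph (Fin n)) (S : Finset (Fin n)) : ℕ := by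
  classical
  exact ((Finset.univ : Finset (Fin n × Fin n)).filter
    fun p => G.Adj p.1 p.2 ∧ p.1 ∈ S ∧ p.2 ∉ S).card

/-- `(S, T)` is a maximum cut of `G`. -/
def IsMaxCut {n : ℕ} (G : SimpleGraph (Fin n)) (S T : Finset (Fin n)) : Prop :=
  T = Sᶜ ∧ ∀ S' : Finset (Fin n), cutCount G S' ≤ cutCount G S

/-- `G` attains the maximum spectral radius among all `n`-vertex `W_t`-free graphs. -/
def IsSpexWheel (t : ℕ) {n : ℕ} (G : SimpleGraph (Fin n)) : Prop :=
  WheelFree t G ∧ ∀ H : SimpleGraph (Fin n), WheelFree t H → lam1 H ≤ lam1 G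

/-- `G` attains the maximum number of edges among all `n`-vertex `W_t`-free graphs. -/
def IsExWheel (t : ℕ) {n : ℕ} (G : SimpleGraph (Fin n)) : Prop :=
  WheelFree t G ∧ ∀ H : SimpleGraph (Fin n), WheelFree t H → edgeCount H ≤ edgeCount G

open scoped Classical in
/-- Real adjacency indicator. -/
noncomputable def adjI {n : ℕ} (G : SimpleGraph (Fin n)) (i j : Fin n) : ℝ :=
  if G.Adj i j then 1 else 0

lemma adjI_nonneg {n : ℕ} (G : SimpleGraph (Fin n)) (i j : Fin n) : 0 ≤ adjI G i j := by
  unfold adjI; split_ifs <;> norm_num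

lemma adjI_le_one {n : ℕ} (G : SimpleGraph (Fin n)) (i j : Fin n) : adjI G i j ≤ 1 := by
  unfold adjI; split_ifs <;> norm_num

lemma adjI_comm {n : ℕ} (G : SimpleGraph (Fin n)) (i j : Fin n) : adjI G i j = adjI G j i := by
  classical
  unfold adjI
  exact if_congr (G.adj_comm i j) rfl rfl

/-- Rayleigh bound and nonnegative eigenvector. -/
lemma perron {n : ℕ} (hn : 0 < n) (G : SimpleGraph (Fin n)) :
    (∀ y : Fin n → ℝ, ∑ i, y i * ∑ j, adjI G i j * y j ≤ lam1 G * ∑ i, y i * y i) ∧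
    ∃ x : Fin n → ℝ, (∀ i, 0 ≤ x i) ∧ (∀ i, x i ≤ 1) ∧ (∃ u, x u = 1) ∧
      ∀ i, ∑ j, adjI G i j * x j = lam1 G * x i := by
  classical
  have : Nonempty (Fin n) := ⟨⟨0, hn⟩⟩
  set A : Matrix (Fin n) (Fin n) ℝ := G.adjMatrix ℝ with hAdef
  have hAij : ∀ i j, A i j = adjI G i j := by
    intro i j; simp [hAdef, adjI, SimpleGraph.adjMatrix_apply]
  have hA : A.IsHermitian := by
    ext i j
    simp [Matrix.conjTranspose_apply, hAij, adjI_comm G i j]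
  set Ev : Set ℝ := {μ : ℝ | Module.End.HasEigenvalue (Matrix.toLin' A) μ} with hEv
  have hlam : lam1 G = sSup Ev := by
    unfold lam1
    simp only [hEv, hAdef]
  have hmem : ∀ (v : Fin n → ℝ) (μ : ℝ), v ≠ 0 → A.mulVec v = μ • v → μ ∈ Ev := by
    intro v μ hv h
    apply Module.End.hasEigenvalue_of_hasEigenvector (x := v)
    rw [Module.End.hasEigenvector_iff, Module.End.mem_eigenspace_iff]
    exact ⟨by simpa [Matrix.toLin'_apply] using h, hv⟩
  have hfin : Ev.Finite := by
    have := Module.End.finite_spectrum (Matrix.toLin' A)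
    refine this.subset ?_
    intro μ hμ
    exact hμ.mem_spectrum
  have hne : Ev.Nonempty := by
    let i : Fin n := ⟨0, hn⟩
    refine ⟨hA.eigenvalues i, hmem (hA.eigenvectorBasis i) _ ?_ (hA.mulVec_eigenvectorBasis i)⟩
    intro h
    have h1 := hA.eigenvectorBasis.orthonormal.ne_zero i
    apply h1
    ext j
    exact congrFun h j
  have hlamEv : lam1 G ∈ Ev := hlam ▸ hne.csSup_mem hfin
  have hle : ∀ μ ∈ Ev, μ ≤ lam1 G := fun μ hμ => hlam ▸ le_csSup hfin.bddAbove hμ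
  set B : Matrix (Fin n) (Fin n) ℝ := lam1 G • (1 : Matrix (Fin n) (Fin n) ℝ) - A with hBdef
  have hBmul : ∀ v : Fin n → ℝ, B.mulVec v = lam1 G • v - A.mulVec v := by
    intro v; rw [hBdef, Matrix.sub_mulVec, Matrix.smul_mulVec, Matrix.one_mulVec]
  have hB : B.IsHermitian := by
    apply Matrix.IsHermitian.sub _ hA
    ext i j
    simp [Matrix.one_apply, eq_comm]
  have hpos : B.PosSemidef := by
    rw [hB.posSemidef_iff_eigenvalues_nonneg]
    intro i
    have h1 := hB.mulVec_eigenvectorBasis i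
    rw [hBmul] at h1
    have h2 : lam1 G - hB.eigenvalues i ∈ Ev := by
      apply hmem (hB.eigenvectorBasis i)
      · intro h
        have h1 := hB.eigenvectorBasis.orthonormal.ne_zero i
        apply h1
        ext j
        exact congrFun h j
      · rw [sub_smul, ← h1]; abel
    have := hle _ h2
    simp only [Pi.zero_apply]
    linarith
  have hform : ∀ y : Fin n → ℝ, y ⬝ᵥ B.mulVec y =
      lam1 G * ∑ i, y i * y i - ∑ i, y i * ∑ j, adjI G i j * y j := by
    intro y
    rw [hBmul, dotProduct_sub, dotProduct_smul]
    simp only [dotProduct, Matrix.mulVec, hAij, smul_eq_mul]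
  have hR : ∀ y : Fin n → ℝ, ∑ i, y i * ∑ j, adjI G i j * y j ≤ lam1 G * ∑ i, y i * y i := by
    intro y
    have := hpos.dotProduct_mulVec_nonneg y
    rw [star_trivial, hform] at this
    linarith
  refine ⟨hR, ?_⟩
  obtain ⟨x, hx⟩ := Module.End.HasEigenvalue.exists_hasEigenvector hlamEv
  have hx0 := hx.2
  have hxe : A.mulVec x = lam1 G • x := by
    have := hx.apply_eq_smul
    simpa [Matrix.toLin'_apply] using this
  let z : Fin n → ℝ := fun i => |x i|
  have hz : z ⬝ᵥ B.mulVec z = 0 := by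
    apply le_antisymm
    · have h1 : x ⬝ᵥ B.mulVec x = 0 := by rw [hBmul, hxe]; simp
      rw [hform] at h1 ⊢
      have h2 : ∑ i, z i * z i = ∑ i, x i * x i := by
        apply Finset.sum_congr rfl; intro i _; exact abs_mul_abs_self _
      have h3 : ∑ i, x i * ∑ j, adjI G i j * x j ≤ ∑ i, z i * ∑ j, adjI G i j * z j := by
        apply Finset.sum_le_sum; intro i _
        refine (le_abs_self _).trans ?_
        rw [abs_mul]
        apply mul_le_mul_of_nonneg_left _ (abs_nonneg _)
        refine (Finset.abs_sum_le_sum_abs _ _).trans ?_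
        apply Finset.sum_le_sum; intro j _
        rw [abs_mul, abs_of_nonneg (adjI_nonneg G i j)]
      rw [h2]; linarith
    · simpa using hpos.dotProduct_mulVec_nonneg z
  have hz2 : B.mulVec z = 0 := by
    have := (hpos.dotProduct_mulVec_zero_iff z).1 (by simpa using hz)
    exact this
  rw [hBmul, sub_eq_zero] at hz2
  obtain ⟨u, _, hu⟩ := Finset.exists_max_image Finset.univ z Finset.univ_nonempty
  have hzu : 0 < z u := by
    obtain ⟨i, hi⟩ := Function.ne_iff.1 hx0
    exact lt_of_lt_of_le (abs_pos.2 hi) (hu i (Finset.mem_univ _))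
  refine ⟨fun i => z i / z u, fun i => div_nonneg (abs_nonneg _) hzu.le,
    fun i => (div_le_one hzu).2 (hu i (Finset.mem_univ _)), ⟨u, div_self hzu.ne'⟩, fun i => ?_⟩
  have h4 := congrFun hz2 i
  simp only [Pi.smul_apply, smul_eq_mul, Matrix.mulVec, dotProduct, hAij] at h4
  rw [← mul_div_assoc, h4, Finset.sum_div]
  exact Finset.sum_congr rfl (fun j _ => by ring)

/-- A complete bipartite `K_{k,k}` in the neighbourhood of a vertex gives a wheel. -/
lemma wheel_of_bip {n k : ℕ} (G : SimpleGraph (Fin n)) (h : Fin n) (P Q : Finset (Fin n))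
    (hP : k ≤ P.card) (hQ : k ≤ Q.card) (hhP : ∀ p ∈ P, G.Adj h p) (hhQ : ∀ q ∈ Q, G.Adj h q)
    (hPQ : ∀ p ∈ P, ∀ q ∈ Q, G.Adj p q) : ¬ WheelFree (2 * k + 1) G := by
  intro hW
  apply hW
  obtain ⟨p⟩ : Nonempty (Fin k ↪ P) := by
    apply Function.Embedding.nonempty_of_card_le; simpa using hP
  obtain ⟨q⟩ : Nonempty (Fin k ↪ Q) := by
    apply Function.Embedding.nonempty_of_card_le; simpa using hQ
  have hp : ∀ i, G.Adj h (p i) := fun i => hhP _ (p i).2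
  have hq : ∀ i, G.Adj h (q i) := fun i => hhQ _ (q i).2
  have hpq : ∀ i j, G.Adj (p i) (q j) := fun i j => hPQ _ (p i).2 _ (q j).2
  have hqp : ∀ i j, G.Adj (q i) (p j) := fun i j => (hpq j i).symm
  let f : Fin (2 * k + 1) → Fin n := fun i =>
    if hi : i.val = 0 then h else
    if i.val % 2 = 1 then p ⟨(i.val - 1) / 2, by omega⟩ else q ⟨i.val / 2 - 1, by omega⟩
  have hinj : Function.Injective f := by
    intro a b hab
    simp only [f] at hab
    split_ifs at hab with h1 h2 h3 h4 h5 h6 h7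
    · ext; omega
    · exact absurd hab (hp _).ne
    · exact absurd hab (hq _).ne
    · exact absurd hab (hp _).ne'
    · have := p.injective (Subtype.ext hab)
      simp only [Fin.mk.injEq] at this
      ext; omega
    · exact absurd hab (hpq _ _).ne
    · exact absurd hab (hq _).ne'
    · exact absurd hab (hqp _ _).ne
    · have := q.injective (Subtype.ext hab)
      simp only [Fin.mk.injEq] at this
      ext; omega
  refine ⟨⟨f, hinj⟩, ?_⟩
  rintro a b ⟨hne, hab⟩
  have hne' : a.val ≠ b.val := fun h => hne (Fin.ext h)
  simp only [Function.Embedding.coeFn_mk, f]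
  split_ifs with h1 h2 h3 h4 h5 h6 h7
  · omega
  · exact hp _
  · exact hq _
  · exact (hp _).symm
  · omega
  · exact hpq _ _
  · exact (hq _).symm
  · exact hqp _ _
  · omega

/-- The graph obtained by replacing the neighbourhood of `v` by `T`. -/
def reNbr {n : ℕ} (G : SimpleGraph (Fin n)) (v : Fin n) (T : Finset (Fin n)) (hv : v ∉ T) :
    SimpleGraph (Fin n) where
  Adj a b := (a ≠ v ∧ b ≠ v ∧ G.Adj a b) ∨ (a = v ∧ b ∈ T) ∨ (b = v ∧ a ∈ T)
  symm := by
    constructor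
    intro a b h
    have := G.adj_comm a b
    tauto
  loopless := by
    constructor
    intro a h
    have := G.irrefl (v := a)
    rcases h with h | ⟨rfl, h⟩ | ⟨rfl, h⟩
    · exact this h.2.2
    · exact hv h
    · exact hv h

lemma reNbr_free {n t : ℕ} (G : SimpleGraph (Fin n)) (hG : WheelFree t G) (v : Fin n)
    (T : Finset (Fin n)) (hv : v ∉ T)
    (hc : ∀ C ⊆ T, C.card ≤ t → ∃ D : Finset (Fin n), t < D.card ∧ ∀ d ∈ D, ∀ c ∈ C, G.Adj d c) :
    WheelFree t (reNbr G v T hv) := by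
  classical
  rintro ⟨f, hf⟩
  let R : Finset (Fin n) := Finset.univ.image f
  have hR : R.card ≤ t := by
    refine Finset.card_image_le.trans ?_; simp
  obtain ⟨D, hD, hDC⟩ := hc (T ∩ R) Finset.inter_subset_left
    ((Finset.card_le_card Finset.inter_subset_right).trans hR)
  obtain ⟨d, hd, hdR⟩ : ∃ d ∈ D, d ∉ R := by
    by_contra! hcon
    exact absurd (Finset.card_le_card (fun x hx => hcon x hx)) (by omega)
  have hfR : ∀ a, f a ∈ R := fun a => Finset.mem_image_of_mem _ (Finset.mem_univ _)
  have hfd : ∀ a, f a ≠ d := fun a h => hdR (h ▸ hfR a)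
  apply hG
  refine ⟨f.trans (Equiv.swap v d).toEmbedding, ?_⟩
  intro a b hab
  simp only [Function.Embedding.trans_apply, Equiv.coe_toEmbedding]
  rcases hf a b hab with ⟨h1, h2, h3⟩ | ⟨h1, h2⟩ | ⟨h1, h2⟩
  · rw [Equiv.swap_apply_of_ne_of_ne h1 (hfd a), Equiv.swap_apply_of_ne_of_ne h2 (hfd b)]
    exact h3
  · have h3 : f b ≠ v := fun h => hv (h ▸ h2)
    rw [Equiv.swap_apply_of_ne_of_ne h3 (hfd b), h1, Equiv.swap_apply_left]
    exact hDC d hd _ (Finset.mem_inter.2 ⟨h2, hfR b⟩)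
  · have h3 : f a ≠ v := fun h => hv (h ▸ h2)
    rw [Equiv.swap_apply_of_ne_of_ne h3 (hfd a), h1, Equiv.swap_apply_left]
    exact (hDC d hd _ (Finset.mem_inter.2 ⟨h2, hfR a⟩)).symm

lemma quad_split {n : ℕ} (G : SimpleGraph (Fin n)) (v : Fin n) (y : Fin n → ℝ) :
    ∑ i, y i * ∑ j, adjI G i j * y j =
      (∑ i ∈ Finset.univ.erase v, y i * ∑ j ∈ Finset.univ.erase v, adjI G i j * y j) +
      2 * (y v * ∑ j ∈ Finset.univ.erase v, adjI G v j * y j) := by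
  have hvv : adjI G v v = 0 := by simp [adjI]
  have h1 : ∀ i, ∑ j, adjI G i j * y j =
      adjI G i v * y v + ∑ j ∈ Finset.univ.erase v, adjI G i j * y j := fun i =>
    (Finset.add_sum_erase _ _ (Finset.mem_univ v)).symm
  rw [← Finset.add_sum_erase _ _ (Finset.mem_univ v)]
  simp only [h1, hvv, zero_mul, zero_add, mul_add, Finset.sum_add_distrib]
  have h2 : ∑ i ∈ Finset.univ.erase v, y i * (adjI G i v * y v) =
      y v * ∑ j ∈ Finset.univ.erase v, adjI G v j * y j := by
    rw [Finset.mul_sum]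
    refine Finset.sum_congr rfl fun i _ => ?_
    rw [adjI_comm G i v]; ring
  rw [h2]; ring

/-- Key inequality: neighbourhood replacement. -/
lemma key_ineq {n t : ℕ} (hn : 0 < n) (G : SimpleGraph (Fin n)) (hG : IsSpexWheel t G)
    (hl : 0 < lam1 G) (x : Fin n → ℝ) (hx0 : ∀ i, 0 ≤ x i)
    (hx : ∀ i, ∑ j, adjI G i j * x j = lam1 G * x i) (v : Fin n) (T : Finset (Fin n)) (hv : v ∉ T)
    (hfree : WheelFree t (reNbr G v T hv)) : ∑ w ∈ T, x w ≤ lam1 G * x v := by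
  classical
  set H := reNbr G v T hv with hH
  set σ := ∑ w ∈ T, x w with hσ
  set s := σ / lam1 G with hs
  have hσ0 : 0 ≤ σ := Finset.sum_nonneg fun i _ => hx0 i
  let y : Fin n → ℝ := Function.update x v s
  have hyv : y v = s := Function.update_self ..
  have hy : ∀ i, i ≠ v → y i = x i := fun i hi => Function.update_of_ne hi ..
  have hle := hG.2 H hfree
  have hR := (perron hn H).1 y
  rw [quad_split H v y] at hR
  have hsumG : ∑ i, x i * ∑ j, adjI G i j * x j = lam1 G * ∑ i, x i * x i := by
    rw [Finset.mul_sum]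
    refine Finset.sum_congr rfl fun i _ => ?_
    rw [hx]; ring
  rw [quad_split G v x] at hsumG
  have hv1 : ∑ j ∈ Finset.univ.erase v, adjI G v j * x j = lam1 G * x v := by
    rw [← hx v, ← Finset.add_sum_erase _ _ (Finset.mem_univ v)]
    simp [adjI]
  have hv2 : ∑ j ∈ Finset.univ.erase v, adjI H v j * y j = σ := by
    rw [hσ]
    have : T = (Finset.univ.erase v).filter (fun j => j ∈ T) := by
      ext j; simp only [Finset.mem_filter, Finset.mem_erase, Finset.mem_univ, and_true]
      constructor
      · intro h; exact ⟨fun h' => hv (h' ▸ h), h⟩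
      · exact fun h => h.2
    conv_rhs => rw [this, Finset.sum_filter]
    refine Finset.sum_congr rfl fun j hj => ?_
    have hjv : j ≠ v := Finset.ne_of_mem_erase hj
    rw [hy j hjv]
    have : H.Adj v j ↔ j ∈ T := by simp [hH, reNbr, hjv]
    simp [adjI, this]
  have hin : ∑ i ∈ Finset.univ.erase v, y i * ∑ j ∈ Finset.univ.erase v, adjI H i j * y j =
      ∑ i ∈ Finset.univ.erase v, x i * ∑ j ∈ Finset.univ.erase v, adjI G i j * x j := by
    refine Finset.sum_congr rfl fun i hi => ?_
    have hiv : i ≠ v := Finset.ne_of_mem_erase hi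
    rw [hy i hiv]
    congr 1
    refine Finset.sum_congr rfl fun j hj => ?_
    have hjv : j ≠ v := Finset.ne_of_mem_erase hj
    rw [hy j hjv]
    have : H.Adj i j ↔ G.Adj i j := by simp [hH, reNbr, hjv, hiv]
    simp [adjI, this]
  rw [hv1] at hsumG
  rw [hv2, hin, hyv] at hR
  have hn1 : ∑ i, y i * y i = s * s + ∑ i ∈ Finset.univ.erase v, x i * x i := by
    rw [← Finset.add_sum_erase _ _ (Finset.mem_univ v), hyv]
    congr 1
    refine Finset.sum_congr rfl fun i hi => ?_
    rw [hy i (Finset.ne_of_mem_erase hi)]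
  have hn2 : ∑ i, x i * x i = x v * x v + ∑ i ∈ Finset.univ.erase v, x i * x i :=
    (Finset.add_sum_erase _ _ (Finset.mem_univ v)).symm
  have hyy : 0 ≤ ∑ i, y i * y i := Finset.sum_nonneg fun i _ => mul_self_nonneg _
  have hR2 := hR.trans (mul_le_mul_of_nonneg_right hle hyy)
  rw [hn1] at hR2
  rw [hn2] at hsumG
  have hsl : lam1 G * s = σ := by rw [hs]; field_simp
  have h1 : σ * σ ≤ (lam1 G * x v) * (lam1 G * x v) := by
    have h2 : s * σ ≤ lam1 G * (x v * x v) := by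
      have : lam1 G * (s * s) = s * σ := by rw [← hsl]; ring
      nlinarith
    have h3 := mul_le_mul_of_nonneg_left h2 hl.le
    calc σ * σ = lam1 G * (s * σ) := by rw [← mul_assoc, hsl]
      _ ≤ _ := h3
      _ = _ := by ring
  exact abs_le_of_sq_le_sq' (by nlinarith) (mul_nonneg hl.le (hx0 v)) |>.2

open scoped Classical in
lemma sum_adjI {n : ℕ} (G : SimpleGraph (Fin n)) (i : Fin n) (W : Finset (Fin n)) :
    ∑ j ∈ W, adjI G i j = ((W.filter fun j => G.Adj i j).card : ℝ) := by
  simp [adjI]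

lemma sum_adjI_le {n : ℕ} (G : SimpleGraph (Fin n)) (i : Fin n) (W : Finset (Fin n)) :
    ∑ j ∈ W, adjI G i j ≤ (W.card : ℝ) := by
  classical
  rw [sum_adjI]; exact_mod_cast Finset.card_filter_le _ _

lemma card_le_n {n : ℕ} (W : Finset (Fin n)) : (W.card : ℝ) ≤ n := by
  have := Finset.card_le_univ W
  simp at this
  exact_mod_cast this

/-- Dense bipartite pigeonhole. -/
lemma exists_common {n k m : ℕ} (G : SimpleGraph (Fin n)) (L W : Finset (Fin n)) (hL : L.card = m)
    (β : ℝ) (hdeg : ∀ i ∈ L, β * n ≤ ∑ j ∈ W, adjI G i j) (hm : 2 * k ≤ m * β) (hk : 0 < k)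
    (hn : m * 2 ^ m < n) :
    ∃ K ⊆ L, K.card = k ∧ ∃ Q ⊆ W, Q.card = k ∧ ∀ p ∈ K, ∀ q ∈ Q, G.Adj p q := by
  classical
  by_contra! hcon
  let com : Finset (Fin n) → Finset (Fin n) := fun K => W.filter fun q => ∀ p ∈ K, G.Adj p q
  have hcom : ∀ K ∈ L.powersetCard k, (com K).card ≤ k := by
    intro K hK
    rw [Finset.mem_powersetCard] at hK
    by_contra! h
    obtain ⟨Q, hQ, hQc⟩ := Finset.exists_subset_card_eq h.le
    obtain ⟨p, hp, q, hq, hpq⟩ := hcon K hK.1 hK.2 Q (hQ.trans (Finset.filter_subset _ _)) hQc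
    exact hpq ((Finset.mem_filter.1 (hQ hq)).2 p hp)
  let R : Finset (Fin n) := W.filter fun w => k ≤ (L.filter fun i => G.Adj w i).card
  have hR : R ⊆ (L.powersetCard k).biUnion com := by
    intro w hw
    rw [Finset.mem_filter] at hw
    obtain ⟨K, hK, hKc⟩ := Finset.exists_subset_card_eq hw.2
    rw [Finset.mem_biUnion]
    refine ⟨K, Finset.mem_powersetCard.2 ⟨hK.trans (Finset.filter_subset _ _), hKc⟩, ?_⟩
    refine Finset.mem_filter.2 ⟨hw.1, fun p hp => ?_⟩
    exact (Finset.mem_filter.1 (hK hp)).2.symm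
  have hRc : R.card ≤ 2 ^ m * k := by
    refine (Finset.card_le_card hR).trans ((Finset.card_biUnion_le_card_mul _ _ _ hcom).trans ?_)
    apply Nat.mul_le_mul_right
    rw [Finset.card_powersetCard, hL]
    exact Nat.choose_le_two_pow m k
  have h1 : (m : ℝ) * (β * n) ≤ ∑ i ∈ L, ∑ j ∈ W, adjI G i j := by
    rw [← hL, ← nsmul_eq_mul]
    exact Finset.card_nsmul_le_sum _ _ _ hdeg
  rw [Finset.sum_comm] at h1
  have h2 : ∑ j ∈ W, ∑ i ∈ L, adjI G i j ≤ ∑ j ∈ W, ((k : ℝ) + if j ∈ R then (m : ℝ) else 0) := by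
    refine Finset.sum_le_sum fun j hj => ?_
    simp only [adjI_comm G _ j]
    rw [sum_adjI]
    split_ifs with hjR
    · have : (L.filter fun i => G.Adj j i).card ≤ m := hL ▸ Finset.card_filter_le _ _
      have : ((L.filter fun i => G.Adj j i).card : ℝ) ≤ m := by exact_mod_cast this
      have := Nat.cast_nonneg (α := ℝ) k
      linarith
    · have : ¬ k ≤ (L.filter fun i => G.Adj j i).card := fun h =>
        hjR (Finset.mem_filter.2 ⟨hj, h⟩)
      rw [add_zero]
      exact_mod_cast (not_le.1 this).le
  rw [Finset.sum_add_distrib, Finset.sum_const, nsmul_eq_mul, ← Finset.sum_filter,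
    Finset.sum_const, nsmul_eq_mul] at h2
  have h3 : ((W.filter fun j => j ∈ R).card : ℝ) ≤ 2 ^ m * k := by
    have : (W.filter fun j => j ∈ R).card ≤ 2 ^ m * k :=
      (Finset.card_le_card (fun j hj => (Finset.mem_filter.1 hj).2)).trans hRc
    exact_mod_cast this
  have h4 := card_le_n W
  have hkp : (0 : ℝ) < k := by exact_mod_cast hk
  have hnp : ((m : ℝ) * 2 ^ m) < n := by exact_mod_cast hn
  have hn0 : (0 : ℝ) ≤ n := Nat.cast_nonneg _
  have h5 : (2 * k : ℝ) * n ≤ m * (β * n) := by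
    rw [← mul_assoc]; exact mul_le_mul_of_nonneg_right hm hn0
  have h6 : (W.card : ℝ) * k ≤ n * k := mul_le_mul_of_nonneg_right h4 hkp.le
  have h7 : ((W.filter fun j => j ∈ R).card : ℝ) * m ≤ 2 ^ m * k * m :=
    mul_le_mul_of_nonneg_right h3 (Nat.cast_nonneg _)
  have h8 : (k : ℝ) * (m * 2 ^ m) < k * n := mul_lt_mul_of_pos_left hnp hkp
  nlinarith

open scoped Classical in
/-- Neighbourhoods in wheel-free graphs are sparse. -/
lemma nbr_sparse (k : ℕ) (hk : 0 < k) (γ : ℝ) (hγ : 0 < γ) :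
    ∃ N : ℕ, ∀ n : ℕ, N ≤ n → ∀ G : SimpleGraph (Fin n), WheelFree (2 * k + 1) G → ∀ h : Fin n,
      ∑ i ∈ Finset.univ.filter (fun i => G.Adj h i),
        ∑ j ∈ Finset.univ.filter (fun i => G.Adj h i), adjI G i j ≤ γ * (n : ℝ) ^ 2 := by
  obtain ⟨m, hm⟩ := exists_nat_gt (2 * k / (γ / 2))
  obtain ⟨N1, hN1⟩ := exists_nat_gt (m / (γ / 2))
  refine ⟨max (m * 2 ^ m + 1) N1, fun n hn G hG h => ?_⟩
  have hnm : m * 2 ^ m < n := by have := le_trans (le_max_left _ _) hn; omega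
  have hnN : (N1 : ℝ) ≤ n := by exact_mod_cast le_trans (le_max_right _ _) hn
  have hg2 : 0 < γ / 2 := by positivity
  rw [div_lt_iff₀ hg2] at hm hN1
  have hmn : (m : ℝ) < n * (γ / 2) := hN1.trans_le (mul_le_mul_of_nonneg_right hnN hg2.le)
  by_contra! hcon
  set W := Finset.univ.filter (fun i => G.Adj h i) with hW
  let L := W.filter fun i => γ / 2 * n ≤ ∑ j ∈ W, adjI G i j
  have hn0 : (0 : ℝ) ≤ n := Nat.cast_nonneg _
  have hLc : m ≤ L.card := by
    have h2 : ∑ i ∈ W, ∑ j ∈ W, adjI G i j ≤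
        ∑ i ∈ W, ((γ / 2 * n : ℝ) + if i ∈ L then (n : ℝ) else 0) := by
      refine Finset.sum_le_sum fun i hi => ?_
      split_ifs with hiL
      · have := (sum_adjI_le G i W).trans (card_le_n W)
        have : 0 ≤ γ / 2 * n := by positivity
        linarith
      · have : ¬ (γ / 2 * n ≤ ∑ j ∈ W, adjI G i j) := fun h' =>
          hiL (Finset.mem_filter.2 ⟨hi, h'⟩)
        linarith
    rw [Finset.sum_add_distrib, Finset.sum_const, nsmul_eq_mul, ← Finset.sum_filter,
      Finset.sum_const, nsmul_eq_mul] at h2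
    have h3 : ((W.filter fun j => j ∈ L).card : ℝ) ≤ L.card := by
      exact_mod_cast (Finset.card_le_card (fun j hj => (Finset.mem_filter.1 hj).2))
    have h4 := card_le_n W
    have h5 : (W.card : ℝ) * (γ / 2 * n) ≤ n * (γ / 2 * n) :=
      mul_le_mul_of_nonneg_right h4 (by positivity)
    have h6 : ((W.filter fun j => j ∈ L).card : ℝ) * n ≤ L.card * n :=
      mul_le_mul_of_nonneg_right h3 hn0
    have h7 : (n : ℝ) * (γ / 2) * n < L.card * n := by nlinarith
    have h8 : (n : ℝ) * (γ / 2) < L.card := lt_of_mul_lt_mul_right h7 hn0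
    exact_mod_cast (hmn.trans h8).le
  obtain ⟨L0, hL0, hL0c⟩ := Finset.exists_subset_card_eq hLc
  obtain ⟨K, hK, hKc, Q, hQ, hQc, hKQ⟩ := exists_common (k := k) G L0 W hL0c (γ / 2)
    (fun i hi => (Finset.mem_filter.1 (hL0 hi)).2) hm.le hk hnm
  refine wheel_of_bip (k := k) G h K Q hKc.ge hQc.ge ?_ ?_ hKQ hG
  · intro p hp
    have := (Finset.mem_filter.1 (hL0 (hK hp))).1
    exact (Finset.mem_filter.1 this).2
  · intro q hq
    exact (Finset.mem_filter.1 (hQ hq)).2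

/-- Lower bound for the spectral radius. -/
lemma lam_lower {n t : ℕ} (hn : 0 < n) (ht : 4 ≤ t) (G : SimpleGraph (Fin n))
    (hG : IsSpexWheel t G) : (n : ℝ) / 2 - 1 ≤ lam1 G := by
  classical
  obtain ⟨S, hS, hSc⟩ := Finset.exists_subset_card_eq
    (show n / 2 ≤ (Finset.univ : Finset (Fin n)).card by simp; omega)
  let H : SimpleGraph (Fin n) :=
    { Adj := fun a b => ¬ (a ∈ S ↔ b ∈ S)
      symm := ⟨fun a b h => by tauto⟩
      loopless := ⟨fun a h => by tauto⟩ }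
  have hH : WheelFree t H := by
    rintro ⟨f, hf⟩
    have h01 := hf ⟨0, by omega⟩ ⟨1, by omega⟩ (by simp [wheelGraph])
    have h02 := hf ⟨0, by omega⟩ ⟨2, by omega⟩ (by simp [wheelGraph])
    have h12 := hf ⟨1, by omega⟩ ⟨2, by omega⟩ (by simp [wheelGraph])
    simp only [H] at h01 h02 h12
    tauto
  refine le_trans ?_ (hG.2 H hH)
  have hR := (perron hn H).1 (fun _ => 1)
  simp only [mul_one, one_mul, Finset.sum_const, Finset.card_univ, Fintype.card_fin,
    nsmul_eq_mul] at hR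
  have hin : ∀ i ∈ S, ∑ j, adjI H i j = (Sᶜ.card : ℝ) := by
    intro i hi
    rw [sum_adjI]
    congr 2
    ext j; simp [H, hi]
  have hout : ∀ i ∈ Sᶜ, ∑ j, adjI H i j = (S.card : ℝ) := by
    intro i hi
    rw [Finset.mem_compl] at hi
    rw [sum_adjI]
    congr 2
    ext j; simp [H, hi]
  rw [← Finset.sum_add_sum_compl S, Finset.sum_congr rfl hin, Finset.sum_congr rfl hout] at hR
  simp only [Finset.sum_const, nsmul_eq_mul] at hR
  have hc : (Sᶜ.card : ℝ) = n - S.card := by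
    rw [Finset.card_compl, Fintype.card_fin, Nat.cast_sub]
    have := Finset.card_le_univ S
    simpa using this
  have hn' : (0 : ℝ) < n := by exact_mod_cast hn
  have h1 : (n : ℝ) ≤ 2 * S.card + 1 := by
    have : n ≤ 2 * S.card + 1 := by omega
    exact_mod_cast this
  have h2 : 2 * (S.card : ℝ) ≤ n := by
    have : 2 * S.card ≤ n := by omega
    exact_mod_cast this
  rw [hc] at hR
  have hn1 : (1 : ℝ) ≤ n := by exact_mod_cast hn
  have h3 : ((n : ℝ) / 2 - 1) * n ≤ lam1 H * n := by nlinarith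
  exact le_of_mul_le_mul_right h3 hn'

open scoped Classical in
lemma common_card {n : ℕ} (G : SimpleGraph (Fin n)) (A C : Finset (Fin n)) (β : ℝ)
    (h : ∀ c ∈ C, (A.card : ℝ) - β ≤ ∑ j ∈ A, adjI G c j) :
    (A.card : ℝ) - C.card * β ≤ ((A.filter fun d => ∀ c ∈ C, G.Adj d c).card : ℝ) := by
  set D := A.filter fun d => ∀ c ∈ C, G.Adj d c with hD
  have hsub : A ⊆ D ∪ C.biUnion (fun c => A.filter fun j => ¬ G.Adj c j) := by
    intro j hj
    by_cases hjD : j ∈ D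
    · exact Finset.mem_union_left _ hjD
    · apply Finset.mem_union_right
      have : ¬ ∀ c ∈ C, G.Adj j c := fun h' => hjD (Finset.mem_filter.2 ⟨hj, h'⟩)
      push Not at this
      obtain ⟨c, hc, hjc⟩ := this
      exact Finset.mem_biUnion.2 ⟨c, hc, Finset.mem_filter.2 ⟨hj, fun h' => hjc h'.symm⟩⟩
  have h1 : A.card ≤ D.card + ∑ c ∈ C, (A.filter fun j => ¬ G.Adj c j).card :=
    (Finset.card_le_card hsub).trans ((Finset.card_union_le _ _).trans
      (Nat.add_le_add_left Finset.card_biUnion_le _))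
  have h2 : ∑ c ∈ C, ((A.filter fun j => ¬ G.Adj c j).card : ℝ) ≤ C.card * β := by
    rw [← nsmul_eq_mul]
    refine Finset.sum_le_card_nsmul _ _ _ fun c hc => ?_
    have h3 := h c hc
    rw [sum_adjI] at h3
    have h4 : (A.card : ℝ) = (A.filter fun j => G.Adj c j).card +
        (A.filter fun j => ¬ G.Adj c j).card := by
      exact_mod_cast (Finset.card_filter_add_card_filter_not (s := A) (fun j => G.Adj c j)).symm
    linarith
  have h5 : (A.card : ℝ) ≤ D.card + ∑ c ∈ C, ((A.filter fun j => ¬ G.Adj c j).card : ℝ) := by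
    exact_mod_cast h1
  linarith

lemma size_bound (a n τ : ℝ) (hn : 0 ≤ n) (hτ : 0 ≤ τ)
    (h : (1 / 4 - τ ^ 2) * n ^ 2 ≤ a * (n - a)) : n / 2 - τ * n ≤ a ∧ a ≤ n / 2 + τ * n := by
  have h1 : (a - n / 2) ^ 2 ≤ (τ * n) ^ 2 := by nlinarith
  have := abs_le_of_sq_le_sq' h1 (by positivity)
  constructor <;> linarith [this.1, this.2]

lemma card_compl_real {n : ℕ} (A : Finset (Fin n)) : ((Aᶜ).card : ℝ) = n - A.card := by
  rw [Finset.card_compl, Fintype.card_fin, Nat.cast_sub]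
  have := Finset.card_le_univ A
  simpa using this

lemma amgm (a n : ℝ) : a * (n - a) ≤ n ^ 2 / 4 := by nlinarith [sq_nonneg (a - n / 2)]

set_option maxHeartbeats 1000000 in
/-- Rough structure: a large cut, and an almost constant Perron vector. -/
lemma rough {k n : ℕ} (hk : 1 ≤ k) (τ : ℝ) (hτ : 0 < τ) (hτk : τ * k = 1 / 100)
    (hn : 2 ≤ τ ^ 2 * n) (G : SimpleGraph (Fin n)) (hG : IsSpexWheel (2 * k + 1) G)
    (hsp : ∀ (h : Fin n) (W : Finset (Fin n)), (∀ w, w ∈ W ↔ G.Adj h w) →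
      ∑ i ∈ W, ∑ j ∈ W, adjI G i j ≤ τ ^ 2 / 2 * (n : ℝ) ^ 2) (hk3 : 3 ≤ k) :
    0 < lam1 G ∧ ∃ x : Fin n → ℝ, (∀ i, 0 ≤ x i) ∧ (∀ i, x i ≤ 1) ∧
      (∀ i, ∑ j, adjI G i j * x j = lam1 G * x i) ∧
      (∀ v, (1 / 2 - 3 * τ) * n ≤ lam1 G * x v) ∧ (∀ v, 1 - 8 * τ ≤ x v) ∧
      ∃ A : Finset (Fin n), (1 / 4 - τ ^ 2) * (n : ℝ) ^ 2 ≤ ∑ i ∈ A, ∑ j ∈ Aᶜ, adjI G i j := by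
  classical
  have hkr : (3 : ℝ) ≤ k := by exact_mod_cast hk3
  have hτ1 : τ ≤ 1 / 300 := by nlinarith
  have hn20 : (20000 : ℝ) * k ^ 2 ≤ n := by
    have h1 : τ ^ 2 * k ^ 2 = 1 / 10000 := by rw [← mul_pow, hτk]; norm_num
    have h2 := mul_le_mul_of_nonneg_right hn (sq_nonneg (k : ℝ))
    have h3 : τ ^ 2 * n * k ^ 2 = 1 / 10000 * n := by rw [← h1]; ring
    rw [h3] at h2; linarith
  have hnk : (60000 : ℝ) * k ≤ n := by nlinarith
  have hn0 : (0 : ℝ) < n := by linarith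
  have hnpos : 0 < n := by exact_mod_cast hn0
  have hτn : 600 ≤ τ * n := by nlinarith
  have hlow := lam_lower hnpos (by omega) G hG
  obtain ⟨-, x, hx0, hx1, ⟨u, hu⟩, hx⟩ := perron hnpos G
  have hl : 0 < lam1 G := by linarith
  set l := lam1 G with hldef
  set A : Finset (Fin n) := Finset.univ.filter (fun i => G.Adj u i) with hA
  have hAmem : ∀ w, w ∈ A ↔ G.Adj u w := by simp [hA]
  have hspA := hsp u A hAmem
  have hll : l * l = ∑ i ∈ A, ∑ j, adjI G i j * x j := by
    have h1 := hx u
    rw [hu, mul_one] at h1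
    have h2 : ∑ j, adjI G u j * x j = ∑ j ∈ A, x j := by
      rw [hA, Finset.sum_filter]
      refine Finset.sum_congr rfl fun j _ => ?_
      simp [adjI]
    rw [h2] at h1
    conv_lhs => rw [← h1, Finset.sum_mul]
    refine Finset.sum_congr rfl fun i _ => ?_
    rw [hx i, ← h1, mul_comm]
  have hll2 : l * l ≤ τ ^ 2 / 2 * (n : ℝ) ^ 2 + ∑ i ∈ A, ∑ j ∈ Aᶜ, adjI G i j * x j := by
    have h1 : ∑ i ∈ A, ∑ j, adjI G i j * x j = ∑ i ∈ A, ∑ j ∈ A, adjI G i j * x j +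
        ∑ i ∈ A, ∑ j ∈ Aᶜ, adjI G i j * x j := by
      rw [← Finset.sum_add_distrib]
      exact Finset.sum_congr rfl fun i _ => (Finset.sum_add_sum_compl A _).symm
    have h2 : ∑ i ∈ A, ∑ j ∈ A, adjI G i j * x j ≤ ∑ i ∈ A, ∑ j ∈ A, adjI G i j :=
      Finset.sum_le_sum fun i _ => Finset.sum_le_sum fun j _ =>
        mul_le_of_le_one_right (adjI_nonneg G i j) (hx1 j)
    rw [hll, h1]; linarith
  have hE1 : ∑ i ∈ A, ∑ j ∈ Aᶜ, adjI G i j * x j ≤ ∑ i ∈ A, ∑ j ∈ Aᶜ, adjI G i j :=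
    Finset.sum_le_sum fun i _ => Finset.sum_le_sum fun j _ =>
        mul_le_of_le_one_right (adjI_nonneg G i j) (hx1 j)
  have hE2 : ∑ i ∈ A, ∑ j ∈ Aᶜ, adjI G i j * x j ≤ A.card * ∑ j ∈ Aᶜ, x j := by
    rw [← nsmul_eq_mul]
    exact Finset.sum_le_card_nsmul _ _ _ fun i _ => Finset.sum_le_sum fun j _ =>
      mul_le_of_le_one_left (hx0 j) (adjI_le_one G i j)
  have hE3 : ∑ i ∈ A, ∑ j ∈ Aᶜ, adjI G i j ≤ A.card * (n - A.card) := by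
    rw [← card_compl_real, ← nsmul_eq_mul]
    exact Finset.sum_le_card_nsmul _ _ _ fun i _ => sum_adjI_le G i _
  set a : ℝ := (A.card : ℝ) with ha
  set E := ∑ i ∈ A, ∑ j ∈ Aᶜ, adjI G i j with hE
  set XB := ∑ j ∈ Aᶜ, x j with hXB
  have hll3 : (1 / 4 - τ ^ 2 / 2) * (n : ℝ) ^ 2 ≤ l * l := by
    have h1 : (n / 2 - 1 : ℝ) * (n / 2 - 1) ≤ l * l := by
      apply mul_self_le_mul_self _ hlow; linarith
    have h2 : 2 * (n : ℝ) ≤ τ ^ 2 * n * n := mul_le_mul_of_nonneg_right hn hn0.le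
    nlinarith
  have hEl : (1 / 4 - τ ^ 2) * (n : ℝ) ^ 2 ≤ E := by linarith
  have hXl : (1 / 4 - τ ^ 2) * (n : ℝ) ^ 2 ≤ a * XB := by linarith
  obtain ⟨ha1, ha2⟩ := size_bound a n τ hn0.le hτ.le (hEl.trans hE3)
  have hapos : 0 < a := by nlinarith
  have hXB2 : (1 / 2 - τ) * n ≤ XB := by
    have h1 : a * ((1 / 2 - τ) * n) ≤ a * XB := by
      refine le_trans ?_ hXl
      have : (1 / 4 - τ ^ 2) * (n : ℝ) ^ 2 = (n / 2 + τ * n) * ((1 / 2 - τ) * n) := by ring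
      rw [this]
      apply mul_le_mul_of_nonneg_right ha2
      apply mul_nonneg _ hn0.le; linarith
    exact le_of_mul_le_mul_left h1 hapos
  have hlu : l ≤ (1 / 2 + τ) * n := by
    have h1 : l * l ≤ τ ^ 2 / 2 * (n : ℝ) ^ 2 + n ^ 2 / 4 := by
      have := amgm a n
      linarith
    have h2 : l ^ 2 ≤ ((1 / 2 + τ) * n) ^ 2 := by
      have h3 : 0 ≤ τ * (n : ℝ) ^ 2 := by positivity
      have h4 : 0 ≤ τ ^ 2 * (n : ℝ) ^ 2 := by positivity
      have h5 : ((1 / 2 + τ) * n) ^ 2 =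
          (n : ℝ) ^ 2 / 4 + τ * (n : ℝ) ^ 2 + τ ^ 2 * (n : ℝ) ^ 2 := by ring
      rw [h5, sq l]; linarith
    exact (abs_le_of_sq_le_sq' h2 (by positivity)).2
  -- good vertices
  let β : ℝ := 25 / 2 * τ * n
  let B' := Aᶜ.filter fun w => a - β ≤ ∑ j ∈ A, adjI G w j
  let Bad := Aᶜ.filter fun w => ¬ (a - β ≤ ∑ j ∈ A, adjI G w j)
  have hβ : 0 < β := by positivity
  have hBad : (Bad.card : ℝ) ≤ τ * n := by
    have h1 : (Bad.card : ℝ) * β ≤ ∑ w ∈ Bad, (a - ∑ j ∈ A, adjI G w j) := by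
      rw [← nsmul_eq_mul]
      refine Finset.card_nsmul_le_sum _ _ _ fun w hw => ?_
      have := (Finset.mem_filter.1 hw).2
      linarith
    have h2 : ∑ w ∈ Bad, (a - ∑ j ∈ A, adjI G w j) ≤ ∑ w ∈ Aᶜ, (a - ∑ j ∈ A, adjI G w j) := by
      apply Finset.sum_le_sum_of_subset_of_nonneg (Finset.filter_subset _ _)
      intro w _ _
      have := sum_adjI_le G w A
      linarith
    have h3 : ∑ w ∈ Aᶜ, (a - ∑ j ∈ A, adjI G w j) = (n - a) * a - E := by
      rw [Finset.sum_sub_distrib, Finset.sum_const, nsmul_eq_mul, card_compl_real, hE,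
        Finset.sum_comm]
      congr 1
      exact Finset.sum_congr rfl fun i _ => Finset.sum_congr rfl fun j _ => adjI_comm G _ _
    have h4 : (n - a) * a - E ≤ τ ^ 2 * (n : ℝ) ^ 2 := by
      have := amgm a n
      linarith
    have h5 : (Bad.card : ℝ) * (τ * n) ≤ (τ * n) * (τ * n) := by
      have h6 : (Bad.card : ℝ) * β ≤ τ ^ 2 * (n : ℝ) ^ 2 := by linarith
      have h7 : (Bad.card : ℝ) * β = 25 / 2 * (Bad.card * (τ * n)) := by simp only [β]; ring
      have h8 : 0 ≤ (Bad.card : ℝ) * (τ * n) := by positivity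
      nlinarith
    exact le_of_mul_le_mul_right h5 (by positivity)
  have hkey : ∀ v, (1 / 2 - 3 * τ) * n ≤ l * x v := by
    intro v
    have h1 : ∑ w ∈ B'.erase v, x w ≤ l * x v := by
      refine key_ineq hnpos G hG hl x hx0 hx v (B'.erase v) (Finset.notMem_erase _ _) ?_
      apply reNbr_free G hG.1
      intro C hC hCc
      refine ⟨A.filter fun d => ∀ c ∈ C, G.Adj d c, ?_, fun d hd => (Finset.mem_filter.1 hd).2⟩
      have h2 := common_card G A C β (fun c hc =>
        (Finset.mem_filter.1 (Finset.mem_of_mem_erase (hC hc))).2)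
      have h3 : (C.card : ℝ) ≤ 3 * k := by
        have : C.card ≤ 3 * k := by omega
        exact_mod_cast this
      have h4 : (C.card : ℝ) * β ≤ 3 / 8 * n := by
        refine (mul_le_mul_of_nonneg_right h3 hβ.le).trans_eq ?_
        have : 3 * (k : ℝ) * β = 75 / 2 * (τ * k) * n := by simp only [β]; ring
        rw [this, hτk]; ring
      have h5 : ((2 * k + 1 : ℕ) : ℝ) < (A.filter fun d => ∀ c ∈ C, G.Adj d c).card := by
        push_cast
        have : τ * n ≤ 1 / 300 * n := mul_le_mul_of_nonneg_right hτ1 hn0.le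
        linarith
      exact_mod_cast h5
    have h2 : XB = ∑ w ∈ B', x w + ∑ w ∈ Bad, x w := by
      rw [hXB]; exact (Finset.sum_filter_add_sum_filter_not _ _ _).symm
    have h3 : ∑ w ∈ Bad, x w ≤ Bad.card := by
      have := Finset.sum_le_card_nsmul Bad x 1 (fun i _ => hx1 i)
      simpa using this
    have h4 : ∑ w ∈ B', x w ≤ ∑ w ∈ B'.erase v, x w + 1 := by
      by_cases hv : v ∈ B'
      · rw [← Finset.sum_erase_add _ _ hv]; linarith [hx1 v]
      · rw [Finset.erase_eq_of_notMem hv]; linarith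
    linarith
  refine ⟨hl, x, hx0, hx1, hx, hkey, fun v => ?_, A, hEl⟩
  have h1 : (1 - 8 * τ) * l ≤ x v * l := by
    have h2 : (1 - 8 * τ) * l ≤ (1 - 8 * τ) * ((1 / 2 + τ) * n) :=
      mul_le_mul_of_nonneg_left hlu (by linarith)
    have h3 : 0 ≤ τ ^ 2 * n := by positivity
    have := hkey v
    nlinarith
  exact le_of_mul_le_mul_right h1 hl

lemma cutCount_eq {n : ℕ} (G : SimpleGraph (Fin n)) (S : Finset (Fin n)) :
    (cutCount G S : ℝ) = ∑ i ∈ S, ∑ j ∈ Sᶜ, adjI G i j := by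
  classical
  unfold cutCount
  have : ∑ i ∈ S, ∑ j ∈ Sᶜ, adjI G i j = ∑ p ∈ S ×ˢ Sᶜ, adjI G p.1 p.2 := by
    rw [Finset.sum_product]
  rw [this]
  simp only [adjI, Finset.sum_boole]
  congr 2
  ext p
  simp only [Finset.mem_filter, Finset.mem_univ, true_and, Finset.mem_product, Finset.mem_compl]
  tauto

lemma cut_swap {n : ℕ} (G : SimpleGraph (Fin n)) (S T : Finset (Fin n)) :
    ∑ i ∈ S, ∑ j ∈ T, adjI G i j = ∑ i ∈ T, ∑ j ∈ S, adjI G i j := by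
  rw [Finset.sum_comm]
  exact Finset.sum_congr rfl fun i _ => Finset.sum_congr rfl fun j _ => adjI_comm G _ _

lemma maxCut_symm {n : ℕ} (G : SimpleGraph (Fin n)) (S T : Finset (Fin n)) (h : IsMaxCut G S T) :
    IsMaxCut G T S := by
  obtain ⟨rfl, h⟩ := h
  refine ⟨(compl_compl S).symm, fun S' => ?_⟩
  have h1 : (cutCount G Sᶜ : ℝ) = cutCount G S := by
    rw [cutCount_eq, cutCount_eq, compl_compl, cut_swap]
  have h2 : cutCount G Sᶜ = cutCount G S := by exact_mod_cast h1
  rw [h2]; exact h S'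

lemma maxCut_deg {n : ℕ} (G : SimpleGraph (Fin n)) (S T : Finset (Fin n)) (h : IsMaxCut G S T)
    (v : Fin n) (hv : v ∈ S) : ∑ j ∈ S, adjI G v j ≤ ∑ j ∈ T, adjI G v j := by
  classical
  obtain ⟨rfl, h⟩ := h
  have h1 : (cutCount G (S.erase v) : ℝ) ≤ cutCount G S := by exact_mod_cast h (S.erase v)
  rw [cutCount_eq, cutCount_eq] at h1
  have hc : (S.erase v)ᶜ = insert v Sᶜ := by
    ext j; simp only [Finset.mem_compl, Finset.mem_erase, Finset.mem_insert]; tauto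
  rw [hc] at h1
  have hvc : v ∉ Sᶜ := by simpa using hv
  simp only [Finset.sum_insert hvc, Finset.sum_add_distrib] at h1
  rw [← Finset.sum_erase_add _ _ hv] at h1
  have h2 : ∑ j ∈ S, adjI G v j = ∑ i ∈ S.erase v, adjI G i v := by
    rw [← Finset.sum_erase_add _ _ hv]
    simp only [adjI_comm G v]
    simp [adjI]
  linarith

lemma degIn_eq {n : ℕ} (G : SimpleGraph (Fin n)) (A : Finset (Fin n)) (v : Fin n) :
    (degIn G A v : ℝ) = ∑ j ∈ A, adjI G v j := by
  classical
  rw [sum_adjI]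
  unfold degIn
  congr 2

/-- Every vertex is adjacent to almost all of the other side of a maximum cut. -/
lemma cross {n : ℕ} (τ : ℝ) (hτ : 0 < τ) (G : SimpleGraph (Fin n))
    (hsp : ∀ (h : Fin n) (W : Finset (Fin n)), (∀ w, w ∈ W ↔ G.Adj h w) →
      ∑ i ∈ W, ∑ j ∈ W, adjI G i j ≤ τ ^ 2 / 2 * (n : ℝ) ^ 2)
    (hdeg : ∀ v, (1 / 2 - 3 * τ) * n ≤ ∑ j, adjI G v j)
    (A : Finset (Fin n)) (hA : (1 / 4 - τ ^ 2) * (n : ℝ) ^ 2 ≤ ∑ i ∈ A, ∑ j ∈ Aᶜ, adjI G i j)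
    (S T : Finset (Fin n)) (hST : IsMaxCut G S T) :
    (n / 2 - τ * n ≤ (T.card : ℝ)) ∧
      ∀ v ∈ S, (T.card : ℝ) - 6 * τ * n ≤ ∑ j ∈ T, adjI G v j := by
  classical
  have hmd := maxCut_deg G S T hST
  obtain ⟨rfl, hmax⟩ := hST
  have hn0 : (0 : ℝ) ≤ n := Nat.cast_nonneg _
  have h1 : (1 / 4 - τ ^ 2) * (n : ℝ) ^ 2 ≤ ∑ i ∈ S, ∑ j ∈ Sᶜ, adjI G i j := by
    rw [← cutCount_eq] at hA ⊢
    have : (cutCount G A : ℝ) ≤ cutCount G S := by exact_mod_cast hmax A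
    linarith
  have h2 : ∑ i ∈ S, ∑ j ∈ Sᶜ, adjI G i j ≤ S.card * (n - S.card) := by
    rw [← card_compl_real, ← nsmul_eq_mul]
    exact Finset.sum_le_card_nsmul _ _ _ fun i _ => sum_adjI_le G i _
  obtain ⟨hs1, hs2⟩ := size_bound (S.card : ℝ) n τ hn0 hτ.le (h1.trans h2)
  have hT := card_compl_real S
  refine ⟨by linarith, fun v hv => ?_⟩
  have hvd := hmd v hv
  let P := S.filter fun j => G.Adj v j
  let Q := Sᶜ.filter fun j => G.Adj v j
  have hP : ∑ j ∈ S, adjI G v j = P.card := sum_adjI G v S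
  have hQ : ∑ j ∈ Sᶜ, adjI G v j = Q.card := sum_adjI G v Sᶜ
  have hPQ : (P.card : ℝ) * Q.card - ∑ i ∈ P, ∑ j ∈ Q, adjI G i j ≤ τ ^ 2 * (n : ℝ) ^ 2 := by
    have e1 : ∀ X Y : Finset (Fin n), (X.card : ℝ) * Y.card - ∑ i ∈ X, ∑ j ∈ Y, adjI G i j =
        ∑ i ∈ X, ∑ j ∈ Y, (1 - adjI G i j) := by
      intro X Y
      simp [Finset.sum_sub_distrib]
    have e2 : ∑ i ∈ P, ∑ j ∈ Q, (1 - adjI G i j) ≤ ∑ i ∈ S, ∑ j ∈ Sᶜ, (1 - adjI G i j) := by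
      have hnn : ∀ i j, 0 ≤ 1 - adjI G i j := fun i j => by linarith [adjI_le_one G i j]
      refine le_trans (Finset.sum_le_sum fun i _ =>
        Finset.sum_le_sum_of_subset_of_nonneg (Finset.filter_subset _ _) fun j _ _ => hnn i j) ?_
      exact Finset.sum_le_sum_of_subset_of_nonneg (Finset.filter_subset _ _) fun i _ _ =>
        Finset.sum_nonneg fun j _ => hnn i j
    rw [← e1, ← e1, hT] at e2
    nlinarith [sq_nonneg ((S.card : ℝ) - n / 2)]
  have hPQ2 : ∑ i ∈ P, ∑ j ∈ Q, adjI G i j ≤ τ ^ 2 / 2 * (n : ℝ) ^ 2 := by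
    let W := Finset.univ.filter fun j => G.Adj v j
    refine le_trans ?_ (hsp v W (by simp [W]))
    have hPW : P ⊆ W := fun j hj => by simp [W, (Finset.mem_filter.1 hj).2]
    have hQW : Q ⊆ W := fun j hj => by simp [W, (Finset.mem_filter.1 hj).2]
    refine le_trans (Finset.sum_le_sum fun i _ =>
      Finset.sum_le_sum_of_subset_of_nonneg hQW fun j _ _ => adjI_nonneg G i j) ?_
    exact Finset.sum_le_sum_of_subset_of_nonneg hPW fun i _ _ =>
        Finset.sum_nonneg fun j _ => adjI_nonneg G i j
  have hP2 : (P.card : ℝ) ≤ 2 * τ * n := by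
    rw [hP, hQ] at hvd
    have h3 : (P.card : ℝ) * P.card ≤ P.card * Q.card :=
      mul_le_mul_of_nonneg_left hvd (Nat.cast_nonneg _)
    have h5 : 0 ≤ τ ^ 2 * (n : ℝ) ^ 2 := by positivity
    have h4 : (P.card : ℝ) ^ 2 ≤ (2 * τ * n) ^ 2 := by nlinarith
    exact (abs_le_of_sq_le_sq' h4 (by positivity)).2
  have h6 := hdeg v
  rw [← Finset.sum_add_sum_compl S, hP] at h6
  linarith

lemma side {k n : ℕ} (hk3 : 3 ≤ k) (τ : ℝ) (hτ : 0 < τ) (hτk : τ * k = 1 / 100)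
    (hn : 2 ≤ τ ^ 2 * n) (G : SimpleGraph (Fin n)) (hG : IsSpexWheel (2 * k + 1) G)
    (hsp : ∀ (h : Fin n) (W : Finset (Fin n)), (∀ w, w ∈ W ↔ G.Adj h w) →
      ∑ i ∈ W, ∑ j ∈ W, adjI G i j ≤ τ ^ 2 / 2 * (n : ℝ) ^ 2)
    (S T : Finset (Fin n)) (hST : IsMaxCut G S T) (u : Fin n) (hu : u ∈ S) :
    T.card - degIn G S u ≤ degIn G T u := by
  classical
  obtain ⟨hl, x, hx0, hx1, hx, hkey, hx8, A, hA⟩ :=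
    rough (by omega) τ hτ hτk hn G hG hsp hk3
  have hkr : (3 : ℝ) ≤ k := by exact_mod_cast hk3
  have hτ1 : τ ≤ 1 / 300 := by nlinarith
  have hn20 : (20000 : ℝ) * k ^ 2 ≤ n := by
    have h1 : τ ^ 2 * k ^ 2 = 1 / 10000 := by rw [← mul_pow, hτk]; norm_num
    have h2 := mul_le_mul_of_nonneg_right hn (sq_nonneg (k : ℝ))
    have h3 : τ ^ 2 * n * k ^ 2 = 1 / 10000 * n := by rw [← h1]; ring
    rw [h3] at h2; linarith
  have hnk : (60000 : ℝ) * k ≤ n := by nlinarith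
  have hn0 : (0 : ℝ) < n := by linarith
  have hnpos : 0 < n := by exact_mod_cast hn0
  have hτn : τ * n ≤ 1 / 300 * n := mul_le_mul_of_nonneg_right hτ1 hn0.le
  have hdeg : ∀ v, (1 / 2 - 3 * τ) * n ≤ ∑ j, adjI G v j := fun v => by
    refine (hkey v).trans ?_
    rw [← hx v]
    exact Finset.sum_le_sum fun j _ => mul_le_of_le_one_right (adjI_nonneg G v j) (hx1 j)
  obtain ⟨hTc, hST1⟩ := cross τ hτ G hsp hdeg A hA S T hST
  obtain ⟨hSc, hTS1⟩ := cross τ hτ G hsp hdeg A hA T S (maxCut_symm G S T hST)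
  obtain ⟨rfl, -⟩ := hST
  have hβ : 0 < 6 * τ * n := by positivity
  have hβk : 6 * τ * n * k = 6 / 100 * n := by
    calc 6 * τ * n * k = 6 * (τ * k) * n := by ring
      _ = _ := by rw [hτk]; ring
  -- bounded inner degree
  have hd : degIn G S u < k := by
    by_contra! hcon
    have hcon' : k ≤ (S.filter fun j => G.Adj u j).card := by
      have : ((degIn G S u : ℕ) : ℝ) = (S.filter fun j => G.Adj u j).card := by
        rw [degIn_eq, sum_adjI]
      have : degIn G S u = (S.filter fun j => G.Adj u j).card := by exact_mod_cast this
      omega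
    obtain ⟨P, hP, hPc⟩ := Finset.exists_subset_card_eq hcon'
    have hPS : ∀ p ∈ P, p ∈ S ∧ G.Adj u p := fun p hp => Finset.mem_filter.1 (hP hp)
    have h1 := common_card G Sᶜ (insert u P) (6 * τ * n) (by
      intro c hc
      rw [Finset.mem_insert] at hc
      rcases hc with rfl | hc
      · exact hST1 c hu
      · exact hST1 c (hPS c hc).1)
    set Q := Sᶜ.filter fun d => ∀ c ∈ insert u P, G.Adj d c with hQ
    have hQm : ∀ q ∈ Q, ∀ c ∈ insert u P, G.Adj q c := fun q hq => (Finset.mem_filter.1 hq).2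
    have h2 : ((insert u P).card : ℝ) ≤ 2 * k := by
      have := Finset.card_insert_le u P
      have : (insert u P).card ≤ 2 * k := by omega
      exact_mod_cast this
    have h3 : ((insert u P).card : ℝ) * (6 * τ * n) ≤ 12 / 100 * n := by
      refine (mul_le_mul_of_nonneg_right h2 hβ.le).trans_eq ?_
      linear_combination 2 * hβk
    have h4 : (k : ℝ) ≤ Q.card := by linarith
    have h5 : k ≤ Q.card := by exact_mod_cast h4
    refine wheel_of_bip (k := k) G u P Q hPc.ge h5 (fun p hp => (hPS p hp).2)
      (fun q hq => (hQm q hq u (Finset.mem_insert_self _ _)).symm)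
      (fun p hp q hq => (hQm q hq p (Finset.mem_insert_of_mem hp)).symm) hG.1
  -- replacement of the neighbourhood of u by T
  have huT : u ∉ Sᶜ := by simpa using hu
  have h1 : ∑ w ∈ Sᶜ, x w ≤ lam1 G * x u := by
    refine key_ineq hnpos G hG hl x hx0 hx u Sᶜ huT ?_
    apply reNbr_free G hG.1
    intro C hC hCc
    refine ⟨S.filter fun d => ∀ c ∈ C, G.Adj d c, ?_, fun d hd => (Finset.mem_filter.1 hd).2⟩
    have h2 := common_card G S C (6 * τ * n) (fun c hc => hTS1 c (hC hc))
    have h3 : (C.card : ℝ) ≤ 3 * k := by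
      have : C.card ≤ 3 * k := by omega
      exact_mod_cast this
    have h4 : (C.card : ℝ) * (6 * τ * n) ≤ 18 / 100 * n := by
      refine (mul_le_mul_of_nonneg_right h3 hβ.le).trans_eq ?_
      linear_combination 3 * hβk
    have h5 : ((2 * k + 1 : ℕ) : ℝ) < (S.filter fun d => ∀ c ∈ C, G.Adj d c).card := by
      push_cast
      linarith
    exact_mod_cast h5
  rw [← hx u, ← Finset.sum_add_sum_compl S] at h1
  have h2 : ∑ j ∈ S, adjI G u j * x j ≤ degIn G S u := by
    rw [degIn_eq]
    exact Finset.sum_le_sum fun j _ => mul_le_of_le_one_right (adjI_nonneg G u j) (hx1 j)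
  have h3 : ∑ j ∈ Sᶜ, (1 - adjI G u j) * (1 - 8 * τ) ≤ ∑ j ∈ Sᶜ, (1 - adjI G u j) * x j :=
    Finset.sum_le_sum fun j _ => mul_le_mul_of_nonneg_left (hx8 j)
      (by linarith [adjI_le_one G u j])
  have h4 : ∑ j ∈ Sᶜ, (1 - adjI G u j) * x j = ∑ j ∈ Sᶜ, x j - ∑ j ∈ Sᶜ, adjI G u j * x j := by
    rw [← Finset.sum_sub_distrib]
    exact Finset.sum_congr rfl fun j _ => by ring
  have h5 : ∑ j ∈ Sᶜ, (1 - adjI G u j) * (1 - 8 * τ) =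
      ((Sᶜ.card : ℝ) - degIn G Sᶜ u) * (1 - 8 * τ) := by
    rw [← Finset.sum_mul, Finset.sum_sub_distrib, degIn_eq]
    simp
  by_contra! hcon
  have h6 : degIn G Sᶜ u + degIn G S u + 1 ≤ Sᶜ.card := by omega
  have h7 : (degIn G Sᶜ u : ℝ) + degIn G S u + 1 ≤ Sᶜ.card := by exact_mod_cast h6
  have h8 : (degIn G S u : ℝ) + 1 ≤ k := by exact_mod_cast hd
  have h9 : ((degIn G S u : ℝ) + 1) * (1 - 8 * τ) ≤
      ((Sᶜ.card : ℝ) - degIn G Sᶜ u) * (1 - 8 * τ) :=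
    mul_le_mul_of_nonneg_right (by linarith) (by linarith)
  have h10 : τ * ((degIn G S u : ℝ) + 1) ≤ τ * k := mul_le_mul_of_nonneg_left h8 hτ.le
  nlinarith

/-- Every vertex of one side of a maximum cut with internal degree `d`
is adjacent to all but at most `d` vertices of the other side. -/
theorem cross_degrees_large (k : ℕ) (hk : 3 ≤ k) :
    ∃ N : ℕ, ∀ n : ℕ, N ≤ n → ∀ G : SimpleGraph (Fin n), IsSpexWheel (2 * k + 1) G →
      ∀ S T : Finset (Fin n), IsMaxCut G S T →
        (∀ u ∈ S, T.card - degIn G S u ≤ degIn G T u) ∧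
        (∀ u ∈ T, S.card - degIn G T u ≤ degIn G S u) := by
  obtain ⟨τ, hτdef⟩ : ∃ τ : ℝ, τ = 1 / (100 * k) := ⟨_, rfl⟩
  have hkr : (3 : ℝ) ≤ k := by exact_mod_cast hk
  have hτ : 0 < τ := by rw [hτdef]; positivity
  have hτk : τ * k = 1 / 100 := by rw [hτdef]; field_simp
  obtain ⟨N1, hN1⟩ := nbr_sparse k (by omega) (τ ^ 2 / 2) (by positivity)
  obtain ⟨N2, hN2⟩ := exists_nat_ge (2 / τ ^ 2)
  refine ⟨max N1 N2, fun n hn G hG S T hST => ?_⟩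
  have hn1 := le_trans (le_max_left _ _) hn
  have hn2 : (N2 : ℝ) ≤ n := by exact_mod_cast le_trans (le_max_right _ _) hn
  have hn3 : 2 ≤ τ ^ 2 * n := by
    have h1 : 2 / τ ^ 2 ≤ n := hN2.trans hn2
    rw [div_le_iff₀ (by positivity)] at h1
    linarith
  have hsp : ∀ (h : Fin n) (W : Finset (Fin n)), (∀ w, w ∈ W ↔ G.Adj h w) →
      ∑ i ∈ W, ∑ j ∈ W, adjI G i j ≤ τ ^ 2 / 2 * (n : ℝ) ^ 2 := by
    classical
    intro h W hW
    have := hN1 n hn1 G hG.1 h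
    have hWe : W = Finset.univ.filter (fun i => G.Adj h i) := by
      ext w; simp [hW]
    rw [hWe]
    convert this
  exact ⟨fun u hu => side hk τ hτ hτk hn3 G hG hsp S T hST u hu,
    fun u hu => side hk τ hτ hτk hn3 G hG hsp T S (maxCut_symm G S T hST) u hu⟩
end

section
/- Let k ≥ 3 be an integer and let C, a, b be fixed nonnegative integers. For all sufficiently large n (depending on k, C, a, b), if G is an n-vertex W_{2k+1}-free simple graph attaining the maximum spectral radius among all n-vertex W_{2k+1}-free graphs, V(G) = S ⊔ T is a maximum cut of G, and there exists a set of at most C edges of G whose removal leaves the induced subgraph on S with maximum degree at most a and the induced subgraph on T with maximum degree at most b, then a + b ≥ k − 1; moreover, if C = 0 then a + b ≥ k. -/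
open Classical in
theorem aux_lam1_le {n : ℕ} (G : SimpleGraph (Fin n)) (B : ℝ) (hB : 0 ≤ B)
    (h : ∀ (μ : ℝ) (x : Fin n → ℝ), x ≠ 0 →
      (∀ i, (∑ j, if G.Adj i j then x j else 0) = μ * x i) → μ ≤ B) : lam1 G ≤ B := by
  unfold lam1
  apply Real.sSup_le _ hB
  intro μ hμ
  obtain ⟨x, hx⟩ := Module.End.HasEigenvalue.exists_hasEigenvector hμ
  refine h μ x hx.2 fun i => ?_
  have := congrFun hx.apply_eq_smul i
  rw [Matrix.toLin'_apply] at this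
  simp only [Matrix.mulVec, dotProduct, SimpleGraph.adjMatrix_apply, ite_mul, one_mul, zero_mul,
    Pi.smul_apply, smul_eq_mul] at this
  convert this

open Classical in
theorem aux_rayleigh {n : ℕ} (G : SimpleGraph (Fin n)) (x : Fin n → ℝ) :
    (∑ i, ∑ j, if G.Adj i j then x i * x j else 0) ≤ lam1 G * ∑ i, x i ^ 2 := by
  by_cases hx : x = 0
  · subst hx; simp
  set A := G.adjMatrix ℝ with hA
  have hH : A.IsHermitian := by
    have := G.isSymm_adjMatrix (α := ℝ)
    rw [Matrix.IsHermitian, Matrix.conjTranspose_eq_transpose_of_trivial]; exact this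
  let T := Matrix.toEuclideanLin A
  have hT : T.IsSymmetric := Matrix.isSymmetric_toEuclideanLin_iff.2 hH
  let v : EuclideanSpace ℝ (Fin n) := WithLp.toLp 2 x
  have hv : v ≠ 0 := by
    intro h; apply hx
    have := congrArg WithLp.ofLp h
    simpa [v] using this
  have : Nontrivial (EuclideanSpace ℝ (Fin n)) := ⟨v, 0, hv⟩
  have h1 := hT.hasEigenvalue_iSup_of_finiteDimensional
  set lam : ℝ := ⨆ x : { x : EuclideanSpace ℝ (Fin n) // x ≠ 0 },
    RCLike.re (inner ℝ (T x) x) / ‖(x : EuclideanSpace ℝ (Fin n))‖ ^ 2 with hlam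
  have hle : lam ≤ lam1 G := by
    unfold lam1
    apply le_csSup
    · exact (Module.End.finite_hasEigenvalue _).bddAbove
    · obtain ⟨w, hw⟩ := h1.exists_hasEigenvector
      have hw1 := hw.apply_eq_smul
      have hw2 := hw.2
      refine Module.End.hasEigenvalue_of_hasEigenvector (x := WithLp.ofLp w) ⟨?_, ?_⟩
      · rw [Module.End.mem_eigenspace_iff, Matrix.toLin'_apply]
        have := congrArg WithLp.ofLp hw1
        rw [Matrix.ofLp_toEuclideanLin_apply] at this
        exact this
      · intro h; apply hw2
        ext i; exact congrFun h i
  have hb : BddAbove (Set.range fun x : { x : EuclideanSpace ℝ (Fin n) // x ≠ 0 } =>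
      RCLike.re (inner ℝ (T x) x) / ‖(x : EuclideanSpace ℝ (Fin n))‖ ^ 2) := by
    refine ⟨‖T.toContinuousLinearMap‖, ?_⟩
    rintro _ ⟨y, rfl⟩
    exact (le_abs_self _).trans (T.toContinuousLinearMap.rayleighQuotient_le_norm y)
  have h2 := le_ciSup hb ⟨v, hv⟩
  have h3 := h2.trans hle
  have hpos : 0 < ‖v‖ ^ 2 := by positivity
  simp only at h3
  rw [div_le_iff₀ hpos] at h3
  have e1 : ‖v‖ ^ 2 = ∑ i, x i ^ 2 := by
    rw [EuclideanSpace.norm_sq_eq]; simp [v]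
  have e2 : RCLike.re (inner ℝ (T v) v) = ∑ i, ∑ j, if G.Adj i j then x i * x j else 0 := by
    simp only [T, v, Matrix.toEuclideanLin_toLp, PiLp.inner_apply]
    simp only [Matrix.toLin'_apply, Matrix.mulVec, dotProduct, hA, SimpleGraph.adjMatrix_apply,
      ite_mul, one_mul, zero_mul]
    simp [Finset.mul_sum]
  rw [e1, e2] at h3
  exact h3

/-- Algebraic core of the upper bound. -/
theorem aux_alg (a b n s t X Y P Q r : ℝ) (hX : 0 ≤ X) (hY : 0 ≤ Y)
    (hP : P ^ 2 ≤ s * X) (hQ : Q ^ 2 ≤ t * Y) (hs : 0 ≤ s) (hst : s + t = n)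
    (hr : 0 ≤ r) (hr2 : r ^ 2 = (a - b) ^ 2 / 4 + n ^ 2 / 4) :
    a * X + b * Y + 2 * (P * Q) ≤ ((a + b) / 2 + r) * (X + Y) := by
  have h1 : |(a - b) / 2| ≤ r := by
    apply abs_le_of_sq_le_sq _ hr
    nlinarith [sq_nonneg n]
  obtain ⟨h2, h3⟩ := abs_le.1 h1
  set α := r - (a - b) / 2 with hα
  set β := r + (a - b) / 2 with hβ
  have hα0 : 0 ≤ α := by linarith
  have hβ0 : 0 ≤ β := by linarith
  have hαβ : α * β = n ^ 2 / 4 := by rw [hα, hβ]; linarith [hr2, sq_nonneg r]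
  have hst4 : 4 * (s * t) ≤ n ^ 2 := by rw [← hst]; nlinarith [sq_nonneg (s - t)]
  have hPQ : (P * Q) ^ 2 ≤ (s * t) * (X * Y) := by
    calc (P * Q) ^ 2 = P ^ 2 * Q ^ 2 := by ring
      _ ≤ (s * X) * (t * Y) := by gcongr
      _ = _ := by ring
  have hXY : 0 ≤ X * Y := by positivity
  have key : 2 * (P * Q) ≤ α * X + β * Y := by
    refine (abs_le_of_sq_le_sq' ?_ (by positivity)).2
    have h5 : 4 * ((s * t) * (X * Y)) ≤ n ^ 2 * (X * Y) := by nlinarith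
    have h6 : n ^ 2 * (X * Y) = 4 * (α * X) * (β * Y) := by
      linear_combination (-4 * (X * Y)) * hαβ
    nlinarith [sq_nonneg (α * X - β * Y)]
  have : α * X + β * Y + (a * X + b * Y) = ((a + b) / 2 + r) * (X + Y) := by
    rw [hα, hβ]; ring
  linarith

/-- Degree bound for a quadratic form. -/
theorem aux_deg {V : Type*} [Fintype V] (D : V → V → Prop) [DecidableRel D] (S : Finset V) [DecidableEq V]
    (hD : ∀ i j, D i j → D j i) (a : ℕ) (y : V → ℝ)
    (h : ∀ v ∈ S, (S.filter fun u => D v u).card ≤ a) :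
    (∑ i ∈ S, ∑ j ∈ S, if D i j then y i * y j else 0) ≤ a * ∑ i ∈ S, y i ^ 2 := by
  have h1 : ∀ i ∈ S, (∑ j ∈ S, if D i j then y i ^ 2 else 0) ≤ a * y i ^ 2 := by
    intro i hi
    rw [← Finset.sum_filter, Finset.sum_const, nsmul_eq_mul]
    have : ((S.filter fun u => D i u).card : ℝ) ≤ a := by exact_mod_cast h i hi
    gcongr
  have h2 : (∑ i ∈ S, ∑ j ∈ S, if D i j then y i ^ 2 else 0) ≤ a * ∑ i ∈ S, y i ^ 2 := by
    rw [Finset.mul_sum]; exact Finset.sum_le_sum h1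
  have h3 : (∑ i ∈ S, ∑ j ∈ S, if D i j then y j ^ 2 else 0) =
      ∑ i ∈ S, ∑ j ∈ S, if D i j then y i ^ 2 else 0 := by
    rw [Finset.sum_comm]
    refine Finset.sum_congr rfl fun i _ => Finset.sum_congr rfl fun j _ => ?_
    by_cases hd : D i j
    · rw [if_pos hd, if_pos (hD _ _ hd)]
    · rw [if_neg hd, if_neg (fun hh => hd (hD _ _ hh))]
  have h4 : (∑ i ∈ S, ∑ j ∈ S, if D i j then y i * y j else 0) ≤
      ∑ i ∈ S, ∑ j ∈ S, ((if D i j then y i ^ 2 else 0) + (if D i j then y j ^ 2 else 0)) / 2 := by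
    refine Finset.sum_le_sum fun i _ => Finset.sum_le_sum fun j _ => ?_
    split_ifs
    · nlinarith [sq_nonneg (y i - y j)]
    · simp
  have h5 : (∑ i ∈ S, ∑ j ∈ S,
      ((if D i j then y i ^ 2 else 0) + (if D i j then y j ^ 2 else 0)) / 2) =
      ((∑ i ∈ S, ∑ j ∈ S, if D i j then y i ^ 2 else 0) +
        (∑ i ∈ S, ∑ j ∈ S, if D i j then y j ^ 2 else 0)) / 2 := by
    simp only [← Finset.sum_div, Finset.sum_add_distrib]
  rw [h5, h3] at h4
  linarith

theorem aux_pairs {n : ℕ} (Es : Finset (Sym2 (Fin n))) [DecidableEq (Sym2 (Fin n))] :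
    ((Finset.univ : Finset (Fin n × Fin n)).filter fun p => s(p.1, p.2) ∈ Es).card ≤
      2 * Es.card := by
  classical
  refine Finset.card_le_mul_card_image_of_maps_to (f := fun p : Fin n × Fin n => s(p.1, p.2))
    ?_ 2 ?_
  · intro p hp; simpa using hp
  · intro e he
    induction e using Sym2.ind with
    | _ u v =>
      calc _ ≤ ({(u, v), (v, u)} : Finset (Fin n × Fin n)).card := by
            apply Finset.card_le_card
            rintro ⟨p, q⟩ hp
            simp only [Finset.mem_filter] at hp
            have := hp.2
            simp only [Sym2.eq_iff] at this
            simp only [Finset.mem_insert, Finset.mem_singleton, Prod.mk.injEq]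
            exact this
        _ ≤ 2 := Finset.card_le_two

open Classical in
theorem aux_upper {n : ℕ} (hn : 0 < n) (G : SimpleGraph (Fin n)) (S : Finset (Fin n)) (a b C : ℕ)
    (Es : Finset (Sym2 (Fin n))) (hC : Es.card ≤ C)
    (hS : ∀ v ∈ S, degIn (G.deleteEdges (↑Es : Set (Sym2 (Fin n)))) S v ≤ a)
    (hT : ∀ v ∈ Sᶜ, degIn (G.deleteEdges (↑Es : Set (Sym2 (Fin n)))) Sᶜ v ≤ b) :
    lam1 G ≤ ((a : ℝ) + b) / 2 + √(((a : ℝ) - b) ^ 2 / 4 + (n : ℝ) ^ 2 / 4) + 8 * C / n := by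
  set r := √(((a : ℝ) - b) ^ 2 / 4 + (n : ℝ) ^ 2 / 4) with hr
  have hr0 : 0 ≤ r := Real.sqrt_nonneg _
  have hr2 : r ^ 2 = ((a : ℝ) - b) ^ 2 / 4 + (n : ℝ) ^ 2 / 4 := Real.sq_sqrt (by positivity)
  have hnR : (0 : ℝ) < n := by exact_mod_cast hn
  have hrn : (n : ℝ) / 2 ≤ r := by
    apply Real.le_sqrt_of_sq_le
    nlinarith [sq_nonneg ((a : ℝ) - b)]
  apply aux_lam1_le _ _ (by positivity)
  intro μ x hx hμ
  by_cases hμn : μ ≤ n / 2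
  · have : 0 ≤ 8 * (C : ℝ) / n := by positivity
    have : 0 ≤ ((a : ℝ) + b) / 2 := by positivity
    linarith
  push Not at hμn
  have hμ0 : 0 < μ := by linarith [hnR]
  set N2 := ∑ i, x i ^ 2 with hN2
  have hN2pos : 0 < N2 := by
    obtain ⟨i, hi⟩ := Function.ne_iff.1 hx
    have hi' : 0 < x i ^ 2 := by have : x i ≠ 0 := hi; positivity
    exact hi'.trans_le (Finset.single_le_sum (f := fun i => x i ^ 2)
      (fun j _ => sq_nonneg _) (Finset.mem_univ i))
  -- entries are small
  have hent : ∀ i, x i ^ 2 ≤ 4 * N2 / n := by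
    intro i
    have h1 : (∑ j, if G.Adj i j then x j else 0) ^ 2 ≤ n * N2 := by
      calc _ ≤ ((Finset.univ : Finset (Fin n)).card : ℝ) *
            ∑ j, (if G.Adj i j then x j else 0) ^ 2 := sq_sum_le_card_mul_sum_sq
        _ ≤ n * N2 := by
          rw [Finset.card_univ, Fintype.card_fin]
          refine mul_le_mul_of_nonneg_left (Finset.sum_le_sum fun j _ => ?_) hnR.le
          split_ifs
          · exact le_rfl
          · nlinarith [sq_nonneg (x j)]
    rw [hμ i, mul_pow] at h1
    rw [le_div_iff₀ hnR]
    have h2 : (n : ℝ) ^ 2 / 4 ≤ μ ^ 2 := by nlinarith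
    have h3 : (n : ℝ) ^ 2 / 4 * x i ^ 2 ≤ n * N2 := le_trans (by gcongr) h1
    have h4 : (n : ℝ) * (x i ^ 2 * n) ≤ n * (4 * N2) := by nlinarith
    exact le_of_mul_le_mul_left h4 hnR
  set y : Fin n → ℝ := fun i => |x i| with hy
  have hy0 : ∀ i, 0 ≤ y i := fun i => abs_nonneg _
  have hy2 : ∀ i, y i ^ 2 = x i ^ 2 := fun i => sq_abs _
  set D := G.deleteEdges (↑Es : Set (Sym2 (Fin n))) with hD
  have hq : μ * N2 = ∑ i, ∑ j, if G.Adj i j then x i * x j else 0 := by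
    rw [hN2, Finset.mul_sum]
    refine Finset.sum_congr rfl fun i _ => ?_
    have : μ * x i ^ 2 = x i * (μ * x i) := by ring
    rw [this, ← hμ i, Finset.mul_sum]
    refine Finset.sum_congr rfl fun j _ => ?_
    split_ifs <;> simp
  have hsplit : (∑ i, ∑ j, if G.Adj i j then x i * x j else 0) ≤
      (∑ i, ∑ j, if D.Adj i j then y i * y j else 0) +
      ∑ i, ∑ j, if s(i, j) ∈ Es then 4 * N2 / n else 0 := by
    simp only [← Finset.sum_add_distrib]
    refine Finset.sum_le_sum fun i _ => Finset.sum_le_sum fun j _ => ?_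
    have hxy : x i * x j ≤ y i * y j := by
      simp only [hy]; rw [← abs_mul]; exact le_abs_self _
    have hyy : 0 ≤ y i * y j := mul_nonneg (hy0 i) (hy0 j)
    have hM : y i * y j ≤ 4 * N2 / n := by
      nlinarith [hent i, hent j, hy2 i, hy2 j, sq_nonneg (y i - y j)]
    by_cases hE : s(i, j) ∈ Es
    · have hDn : ¬ D.Adj i j := by
        rw [hD, SimpleGraph.deleteEdges_adj]; intro h; exact h.2 (by exact_mod_cast hE)
      rw [if_pos hE, if_neg hDn]
      split_ifs
      · linarith
      · linarith
    · rw [if_neg hE]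
      by_cases hG : G.Adj i j
      · have hDn : D.Adj i j := by
          rw [hD, SimpleGraph.deleteEdges_adj]; exact ⟨hG, by exact_mod_cast hE⟩
        rw [if_pos hG, if_pos hDn]; linarith
      · rw [if_neg hG]
        split_ifs
        · linarith
        · simp
  have hEs : (∑ i, ∑ j, if s(i, j) ∈ Es then 4 * N2 / n else 0) ≤ 8 * C / n * N2 := by
    rw [← Finset.sum_product' (s := Finset.univ) (t := Finset.univ)
      (f := fun i j => if s(i, j) ∈ Es then 4 * N2 / n else 0), Finset.univ_product_univ,
      ← Finset.sum_filter, Finset.sum_const, nsmul_eq_mul]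
    have h1 : (((Finset.univ : Finset (Fin n × Fin n)).filter
        fun p => s(p.1, p.2) ∈ Es).card : ℝ) ≤ 2 * C := by
      exact_mod_cast (aux_pairs Es).trans (by omega)
    calc _ ≤ (2 * C : ℝ) * (4 * N2 / n) := by gcongr
      _ = _ := by ring
  have hDD : (∑ i, ∑ j, if D.Adj i j then y i * y j else 0) ≤
      (∑ i ∈ S, ∑ j ∈ S, if D.Adj i j then y i * y j else 0) +
      (∑ i ∈ Sᶜ, ∑ j ∈ Sᶜ, if D.Adj i j then y i * y j else 0) +
      2 * ((∑ i ∈ S, y i) * ∑ i ∈ Sᶜ, y i) := by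
    have e : ∀ i, (∑ j, if D.Adj i j then y i * y j else 0) =
      (∑ j ∈ S, if D.Adj i j then y i * y j else 0) +
      ∑ j ∈ Sᶜ, if D.Adj i j then y i * y j else 0 := fun i =>
        (Finset.sum_add_sum_compl S _).symm
    rw [← Finset.sum_add_sum_compl S]
    simp only [e, Finset.sum_add_distrib]
    have c1 : (∑ i ∈ S, ∑ j ∈ Sᶜ, if D.Adj i j then y i * y j else 0) ≤
        (∑ i ∈ S, y i) * ∑ i ∈ Sᶜ, y i := by
      rw [Finset.sum_mul_sum]
      refine Finset.sum_le_sum fun i _ => Finset.sum_le_sum fun j _ => ?_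
      have := mul_nonneg (hy0 i) (hy0 j)
      split_ifs <;> linarith
    have c2 : (∑ i ∈ Sᶜ, ∑ j ∈ S, if D.Adj i j then y i * y j else 0) ≤
        (∑ i ∈ Sᶜ, y i) * ∑ i ∈ S, y i := by
      rw [Finset.sum_mul_sum]
      refine Finset.sum_le_sum fun i _ => Finset.sum_le_sum fun j _ => ?_
      have := mul_nonneg (hy0 i) (hy0 j)
      split_ifs <;> linarith
    rw [mul_comm] at c2
    linarith
  have dS := aux_deg D.Adj S (fun i j h => h.symm) a y (by
    intro v hv; have := hS v hv; unfold degIn at this; convert this)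
  have dT := aux_deg D.Adj Sᶜ (fun i j h => h.symm) b y (by
    intro v hv; have := hT v hv; unfold degIn at this; convert this)
  have hsum : (∑ i ∈ S, y i ^ 2) + ∑ i ∈ Sᶜ, y i ^ 2 = N2 := by
    rw [Finset.sum_add_sum_compl]; simp only [hy2, hN2]
  have hcard : (S.card : ℝ) + (Sᶜ.card : ℝ) = n := by
    have := Finset.card_add_card_compl S
    rw [Fintype.card_fin] at this
    exact_mod_cast this
  have halg := aux_alg a b n S.card Sᶜ.card (∑ i ∈ S, y i ^ 2) (∑ i ∈ Sᶜ, y i ^ 2)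
    (∑ i ∈ S, y i) (∑ i ∈ Sᶜ, y i) r (Finset.sum_nonneg fun i _ => sq_nonneg _)
    (Finset.sum_nonneg fun i _ => sq_nonneg _) sq_sum_le_card_mul_sum_sq sq_sum_le_card_mul_sum_sq
    (by positivity) hcard hr0 hr2
  rw [hsum] at halg
  have hfin : μ * N2 ≤ (((a : ℝ) + b) / 2 + r + 8 * C / n) * N2 := by
    rw [add_mul]; linarith
  exact le_of_mul_le_mul_right hfin hN2pos

theorem aux_reg (k s : ℕ) (hk : 3 ≤ k) (hs : Even s) (hbig : k * (2 * k - 2) ≤ s) :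
    ∃ (R : ℕ → ℕ → Prop) (c : ℕ → ℕ), (∀ i j, R i j → R j i) ∧ (∀ i, ¬ R i i) ∧
      (∀ i j, R i j → c i = c j) ∧
      (∀ i < s, ∃ F : Finset ℕ, F.card = k - 1 ∧ ∀ j, j ∈ F ↔ j < s ∧ R i j) ∧
      (∀ l, ∃ F : Finset ℕ, F.card ≤ 2 * k - 2 ∧ ∀ j < s, c j = l → j ∈ F) := by
  obtain ⟨p, rfl⟩ : ∃ p, k = p + 1 := ⟨k - 1, by omega⟩
  have hp : 2 ≤ p := by omega
  have e1 : 2 * (p + 1) - 2 = 2 * p := by omega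
  rw [e1] at hbig ⊢
  obtain ⟨h, hh⟩ := hs
  -- choose the number of bipartite blocks
  obtain ⟨β, hβ, γ, hγ⟩ : ∃ β ≤ p + 1, ∃ γ, h + β = (p + 1) * γ := by
    refine ⟨(p + 1) - h % (p + 1), by omega, h / (p + 1) + 1, ?_⟩
    have h1 := Nat.div_add_mod h (p + 1)
    have h2 := Nat.mod_lt h (Nat.succ_pos p)
    have h3 : (p + 1) * (h / (p + 1) + 1) = (p + 1) * (h / (p + 1)) + (p + 1) := by ring
    simp only [Nat.succ_eq_add_one] at h2
    omega
  set m := β * (2 * p) with hm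
  have hms : m ≤ s := le_trans (Nat.mul_le_mul_right _ hβ) hbig
  obtain ⟨α, hα⟩ : ∃ α, s = m + (p + 1) * α := by
    have : (p + 1) ∣ s - m := by
      have h4 : s + 2 * β = (p + 1) * (2 * γ) := by
        have : s + 2 * β = 2 * (h + β) := by omega
        rw [this, hγ]; ring
      have h5 : (s - m) + (p + 1) * (2 * β) = (p + 1) * (2 * γ) := by
        have : (p + 1) * (2 * β) = m + 2 * β := by rw [hm]; ring
        omega
      exact (Nat.dvd_add_left (Dvd.intro _ rfl)).1 (h5 ▸ Dvd.intro _ rfl)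
    obtain ⟨α, hα⟩ := this
    exact ⟨α, by omega⟩
  set c : ℕ → ℕ := fun i => if i < m then 2 * (i / (2 * p)) else 2 * ((i - m) / (p + 1)) + 1 with hc
  have c1 : ∀ i, i < m → c i = 2 * (i / (2 * p)) := fun i hi => if_pos hi
  have c2 : ∀ i, ¬ i < m → c i = 2 * ((i - m) / (p + 1)) + 1 := fun i hi => if_neg hi
  have csame : ∀ i j, c i = c j → (i < m ↔ j < m) := by
    intro i j hij
    by_cases hi : i < m <;> by_cases hj : j < m
    · tauto
    · rw [c1 i hi, c2 j hj] at hij; omega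
    · rw [c2 i hi, c1 j hj] at hij; omega
    · tauto
  have div1 : ∀ j Q, j / (2 * p) = Q ↔ 2 * p * Q ≤ j ∧ j < 2 * p * Q + 2 * p := by
    intro j Q
    rw [Nat.div_eq_iff (by omega), mul_comm Q]
    omega
  have div2 : ∀ j Q, j / (p + 1) = Q ↔ (p + 1) * Q ≤ j ∧ j < (p + 1) * Q + (p + 1) := by
    intro j Q
    rw [Nat.div_eq_iff (by omega), mul_comm Q]
    omega
  have blk1 : ∀ i, i < m → ∀ j, (c i = c j ↔
      2 * p * (i / (2 * p)) ≤ j ∧ j < 2 * p * (i / (2 * p)) + 2 * p) := by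
    intro i hi j
    have hb : 2 * p * (i / (2 * p)) + 2 * p ≤ m := by
      have : i / (2 * p) < β := (Nat.div_lt_iff_lt_mul (by omega)).2 hi
      calc _ = (i / (2 * p) + 1) * (2 * p) := by ring
        _ ≤ β * (2 * p) := Nat.mul_le_mul_right _ this
    rw [← div1]
    constructor
    · intro hij
      have hj := (csame _ _ hij).1 hi
      rw [c1 i hi, c1 j hj] at hij
      omega
    · intro hij
      have hj : j < m := by have := (div1 _ _).1 hij; omega
      rw [c1 i hi, c1 j hj, hij]
  have blk2 : ∀ i, ¬ i < m → ∀ j, (c i = c j ↔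
      m + (p + 1) * ((i - m) / (p + 1)) ≤ j ∧ j < m + (p + 1) * ((i - m) / (p + 1)) + (p + 1)) := by
    intro i hi j
    constructor
    · intro hij
      have hj : ¬ j < m := fun hj => hi ((csame _ _ hij).2 hj)
      rw [c2 i hi, c2 j hj] at hij
      have : (j - m) / (p + 1) = (i - m) / (p + 1) := by omega
      have := (div2 _ _).1 this
      omega
    · intro hij
      have hj : ¬ j < m := by omega
      have : (j - m) / (p + 1) = (i - m) / (p + 1) := (div2 _ _).2 (by omega)
      rw [c2 i hi, c2 j hj, this]
  refine ⟨fun i j => i ≠ j ∧ c i = c j ∧ (i < m → i % 2 ≠ j % 2), c, ?_, ?_, ?_, ?_, ?_⟩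
  · rintro i j ⟨h1, h2, h3⟩
    exact ⟨h1.symm, h2.symm, fun hj => (h3 ((csame _ _ h2).2 hj)).symm⟩
  · rintro i ⟨h1, -⟩; exact h1 rfl
  · rintro i j ⟨-, h2, -⟩; exact h2
  · intro i hi
    by_cases him : i < m
    · refine ⟨(Finset.range p).image fun t => 2 * p * (i / (2 * p)) + 2 * t + (1 - i % 2), ?_, ?_⟩
      · rw [Finset.card_image_of_injective, Finset.card_range]
        · omega
        · intro t u htu
          simp only at htu
          omega
      · intro j
        have hb : 2 * p * (i / (2 * p)) + 2 * p ≤ m := by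
          have : i / (2 * p) < β := (Nat.div_lt_iff_lt_mul (by omega)).2 him
          calc _ = (i / (2 * p) + 1) * (2 * p) := by ring
            _ ≤ β * (2 * p) := Nat.mul_le_mul_right _ this
        beta_reduce
        rw [blk1 i him j]
        have e : 2 * p * (i / (2 * p)) = 2 * (p * (i / (2 * p))) := by ring
        rw [e] at hb ⊢
        generalize p * (i / (2 * p)) = w at *
        simp only [Finset.mem_image, Finset.mem_range]
        constructor
        · rintro ⟨t, ht, rfl⟩
          refine ⟨by omega, ?_, by omega, fun _ => by omega⟩
          intro hcon; omega
        · rintro ⟨h1, h2, h3, h4⟩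
          have h4 := h4 him
          exact ⟨(j - 2 * w) / 2, by omega, by omega⟩
    · refine ⟨(Finset.Ico (m + (p + 1) * ((i - m) / (p + 1)))
        (m + (p + 1) * ((i - m) / (p + 1)) + (p + 1))).erase i, ?_, ?_⟩
      · rw [Finset.card_erase_of_mem, Nat.card_Ico]
        · omega
        · rw [Finset.mem_Ico]; exact (blk2 i him i).1 rfl
      · intro j
        rw [Finset.mem_erase, Finset.mem_Ico, ← blk2 i him j]
        constructor
        · rintro ⟨h1, h2⟩
          refine ⟨?_, fun h => h1 h.symm, h2, fun h => absurd h him⟩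
          have := (blk2 i him j).1 h2
          have hlt : (i - m) / (p + 1) < α :=
            (Nat.div_lt_iff_lt_mul (by omega)).2 (by rw [mul_comm]; omega)
          have : (p + 1) * ((i - m) / (p + 1)) + (p + 1) ≤ (p + 1) * α := by
            calc _ = (p + 1) * ((i - m) / (p + 1) + 1) := by ring
              _ ≤ _ := Nat.mul_le_mul_left _ hlt
          omega
        · rintro ⟨h1, h2, h3, h4⟩
          exact ⟨fun h => h2 h.symm, h3⟩
  · intro l
    by_cases hl : ∃ i, c i = l
    · obtain ⟨i, rfl⟩ := hl
      by_cases him : i < m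
      · refine ⟨Finset.Ico (2 * p * (i / (2 * p))) (2 * p * (i / (2 * p)) + 2 * p), ?_, ?_⟩
        · rw [Nat.card_Ico]; omega
        · intro j _ hj
          rw [Finset.mem_Ico]; exact (blk1 i him j).1 hj.symm
      · refine ⟨Finset.Ico (m + (p + 1) * ((i - m) / (p + 1)))
          (m + (p + 1) * ((i - m) / (p + 1)) + (p + 1)), ?_, ?_⟩
        · rw [Nat.card_Ico]; omega
        · intro j _ hj
          rw [Finset.mem_Ico]; exact (blk2 i him j).1 hj.symm
    · exact ⟨∅, by simp, fun j _ hj => absurd ⟨j, hj⟩ hl⟩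

/-- The comparison graph: complete bipartite between `i < s` and `i ≥ s`, plus `R` inside the
first part, plus one edge inside the second part. -/
def auxH (n s : ℕ) (R : ℕ → ℕ → Prop) (hR : ∀ i j, R i j → R j i) (hR' : ∀ i, ¬ R i i) :
    SimpleGraph (Fin n) where
  Adj i j := (i.val < s ∧ s ≤ j.val) ∨ (j.val < s ∧ s ≤ i.val) ∨
    (i.val < s ∧ j.val < s ∧ R i.val j.val) ∨ (i.val = s ∧ j.val = s + 1) ∨
    (i.val = s + 1 ∧ j.val = s)
  symm := by
    constructor
    intro i j h
    rcases h with h | h | h | h | h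
    · exact Or.inr (Or.inl h)
    · exact Or.inl h
    · exact Or.inr (Or.inr (Or.inl ⟨h.2.1, h.1, hR _ _ h.2.2⟩))
    · exact Or.inr (Or.inr (Or.inr (Or.inr ⟨h.2, h.1⟩)))
    · exact Or.inr (Or.inr (Or.inr (Or.inl ⟨h.2, h.1⟩)))
  loopless := by
    constructor
    intro i h
    rcases h with h | h | h | h | h
    · omega
    · omega
    · exact hR' _ h.2.2
    · omega
    · omega

theorem aux_wheelFree (n s k : ℕ) (hk : 3 ≤ k) (R : ℕ → ℕ → Prop) (hR : ∀ i j, R i j → R j i)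
    (hR' : ∀ i, ¬ R i i) (c : ℕ → ℕ) (hRc : ∀ i j, R i j → c i = c j)
    (hdeg : ∀ i < s, ∃ F : Finset ℕ, F.card = k - 1 ∧ ∀ j, j ∈ F ↔ j < s ∧ R i j)
    (hblk : ∀ l, ∃ F : Finset ℕ, F.card ≤ 2 * k - 2 ∧ ∀ j < s, c j = l → j ∈ F) :
    WheelFree (2 * k + 1) (auxH n s R hR hR') := by
  rintro ⟨f, hf⟩
  have : NeZero (2 * k) := ⟨by omega⟩
  have : Fact (1 < 2 * k) := ⟨by omega⟩
  set g : ZMod (2 * k) → ℕ := fun i => (f ⟨i.val + 1, by have := ZMod.val_lt i; omega⟩).val with hg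
  set v : ℕ := (f ⟨0, by omega⟩).val with hv
  have ginj : Function.Injective g := by
    intro i j hij
    have h1 := f.injective (Fin.ext hij)
    have h2 : i.val + 1 = j.val + 1 := congrArg Fin.val h1
    exact ZMod.val_injective _ (by omega)
  have hval : ∀ i : ZMod (2 * k), (i.val + 1 < 2 * k ∧ (i + 1).val = i.val + 1) ∨
      (i.val + 1 = 2 * k ∧ (i + 1).val = 0) := by
    intro i
    have h1 := ZMod.val_lt i
    have h2 := ZMod.val_add i 1
    rw [ZMod.val_one] at h2
    by_cases h : i.val + 1 < 2 * k
    · left; exact ⟨h, by rw [h2, Nat.mod_eq_of_lt h]⟩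
    · right
      have : i.val + 1 = 2 * k := by omega
      exact ⟨this, by rw [h2, this, Nat.mod_self]⟩
  have gc : ∀ i, (v < s ∧ s ≤ g i) ∨ (g i < s ∧ s ≤ v) ∨
    (v < s ∧ g i < s ∧ R v (g i)) ∨ (v = s ∧ g i = s + 1) ∨ (v = s + 1 ∧ g i = s) := by
    intro i
    refine hf ⟨0, by omega⟩ ⟨i.val + 1, by have := ZMod.val_lt i; omega⟩ ⟨?_, Or.inl rfl⟩
    intro h; have := congrArg Fin.val h; simp at this
  have gg : ∀ i, (g i < s ∧ s ≤ g (i + 1)) ∨ (g (i + 1) < s ∧ s ≤ g i) ∨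
    (g i < s ∧ g (i + 1) < s ∧ R (g i) (g (i + 1))) ∨ (g i = s ∧ g (i + 1) = s + 1) ∨
      (g i = s + 1 ∧ g (i + 1) = s) := by
    intro i
    refine hf ⟨i.val + 1, by have := ZMod.val_lt i; omega⟩
      ⟨(i + 1).val + 1, by have := ZMod.val_lt (i + 1); omega⟩ ⟨?_, ?_⟩
    · intro h; have := congrArg Fin.val h; simp only at this
      rcases hval i with h | h <;> omega
    · simp only
      rcases hval i with h | h <;> omega
  by_cases hvs : v < s
  · -- the centre is in the first part
    obtain ⟨F, hF, hF'⟩ := hdeg v hvs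
    set A : Finset (ZMod (2 * k)) := Finset.univ.filter fun i => g i < s with hA
    have hAc : A.card ≤ k - 1 := by
      rw [← hF]
      apply Finset.card_le_card_of_injOn g _ ginj.injOn
      intro i hi
      have hi' : g i < s := by simpa [hA] using hi
      rw [Finset.mem_coe, hF']
      refine ⟨hi', ?_⟩
      rcases gc i with h | h | h | h | h
      · omega
      · omega
      · exact h.2.2
      · omega
      · omega
    set A' : Finset (ZMod (2 * k)) := A.map (Equiv.subRight (1 : ZMod (2 * k))).toEmbedding with hA'
    have hA'c : A'.card = A.card := Finset.card_map _
    have hU : (A ∪ A').card ≤ 2 * k - 2 := by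
      have := Finset.card_union_le A A'
      omega
    have hcomp : 1 < ((A ∪ A')ᶜ).card := by
      rw [Finset.card_compl, ZMod.card]; omega
    obtain ⟨i, hi, j, hj, hij⟩ := Finset.one_lt_card.1 hcomp
    have key : ∀ i ∈ (A ∪ A')ᶜ, (g i = s ∧ g (i + 1) = s + 1) ∨
        (g i = s + 1 ∧ g (i + 1) = s) := by
      intro i hi
      rw [Finset.mem_compl, Finset.mem_union, not_or] at hi
      have h1 : ¬ g i < s := by
        intro h; exact hi.1 (by simp [hA, h])
      have h2 : ¬ g (i + 1) < s := by
        intro h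
        apply hi.2
        rw [hA', Finset.mem_map]
        exact ⟨i + 1, by simp [hA, h], by simp⟩
      rcases gg i with h | h | h | h | h
      · omega
      · omega
      · omega
      · exact Or.inl h
      · exact Or.inr h
    have two : ∀ i : ZMod (2 * k), i + 1 + 1 ≠ i := by
      intro i h
      have h1 := congrArg ZMod.val h
      rcases hval i with h2 | h2 <;> rcases hval (i + 1) with h3 | h3 <;> omega
    rcases key i hi with h1 | h1 <;> rcases key j hj with h2 | h2
    · exact hij (ginj (h1.1.trans h2.1.symm))
    · have e1 : i = j + 1 := ginj (h1.1.trans h2.2.symm)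
      have e2 : i + 1 = j := ginj (h1.2.trans h2.1.symm)
      exact two i (by rw [e2, ← e1])
    · have e1 : i = j + 1 := ginj (h1.1.trans h2.2.symm)
      have e2 : i + 1 = j := ginj (h1.2.trans h2.1.symm)
      exact two i (by rw [e2, ← e1])
    · exact hij (ginj (h1.1.trans h2.1.symm))
  · -- the centre is in the second part
    obtain ⟨i0, hi0⟩ : ∃ i0, ∀ i, i ≠ i0 → g i < s := by
      by_cases hall : ∃ i0, ¬ g i0 < s
      · obtain ⟨i0, hi0⟩ := hall
        refine ⟨i0, fun i hi => ?_⟩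
        by_contra hcon
        apply hi
        apply ginj
        have h1 := gc i
        have h2 := gc i0
        omega
      · push Not at hall
        exact ⟨0, fun i _ => hall i⟩
    have hne : ∀ t : ℕ, t < 2 * k - 1 → i0 + 1 + (t : ZMod (2 * k)) ≠ i0 := by
      intro t ht h
      have h1 : ((t + 1 : ℕ) : ZMod (2 * k)) = 0 := by
        push_cast
        have : i0 + ((t : ZMod (2 * k)) + 1) = i0 + 0 := by
          rw [add_zero]; linear_combination h
        exact add_left_cancel this
      rw [ZMod.natCast_eq_zero_iff] at h1
      have := Nat.le_of_dvd (by omega) h1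
      omega
    have hlab : ∀ t : ℕ, t < 2 * k - 1 → c (g (i0 + 1 + (t : ZMod (2 * k)))) = c (g (i0 + 1)) := by
      intro t
      induction t with
      | zero => intro _; simp
      | succ t ih =>
        intro ht
        rw [← ih (by omega)]
        have h1 := hi0 _ (hne t (by omega))
        have h2 := hi0 _ (hne (t + 1) ht)
        have e : i0 + 1 + ((t + 1 : ℕ) : ZMod (2 * k)) = i0 + 1 + (t : ZMod (2 * k)) + 1 := by
          push_cast; ring
        rw [e] at h2 ⊢
        rcases gg (i0 + 1 + (t : ZMod (2 * k))) with h | h | h | h | h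
        · omega
        · omega
        · exact (hRc _ _ h.2.2).symm
        · omega
        · omega
    obtain ⟨F, hF, hF'⟩ := hblk (c (g (i0 + 1)))
    have : (Finset.range (2 * k - 1)).card ≤ F.card := by
      apply Finset.card_le_card_of_injOn (fun t : ℕ => g (i0 + 1 + (t : ZMod (2 * k))))
      · intro t ht
        have ht' : t < 2 * k - 1 := by simpa using ht
        exact hF' _ (hi0 _ (hne t ht')) (hlab t ht')
      · intro t ht u hu htu
        have ht' : t < 2 * k - 1 := by simpa using ht
        have hu' : u < 2 * k - 1 := by simpa using hu
        have h1 := add_left_cancel (ginj htu)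
        have h2 := congrArg ZMod.val h1
        rwa [ZMod.val_natCast_of_lt (by omega), ZMod.val_natCast_of_lt (by omega)] at h2
    rw [Finset.card_range] at this
    omega

open Classical in
theorem aux_lower (n s k : ℕ) (hk : 3 ≤ k) (R : ℕ → ℕ → Prop) (hR : ∀ i j, R i j → R j i)
    (hR' : ∀ i, ¬ R i i) (hsn : s + 2 ≤ n) (hs : 0 < s)
    (hdeg : ∀ i < s, ∃ F : Finset ℕ, F.card = k - 1 ∧ ∀ j, j ∈ F ↔ j < s ∧ R i j)
    (l : ℝ) (hl : l ^ 2 = ((k : ℝ) - 1) * l + s * ((n : ℝ) - s)) :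
    l * (l ^ 2 + ((n : ℝ) - s) * s) + 2 * s ≤
      lam1 (auxH n s R hR hR') * (l ^ 2 + ((n : ℝ) - s) * s) := by
  set H := auxH n s R hR hR' with hH
  set x : Fin n → ℝ := fun i => if i.val < s then l else s with hx
  have hmain := aux_rayleigh H x
  have cS : ((Finset.univ.filter fun i : Fin n => i.val < s).card : ℝ) = s := by
    have : (Finset.univ.filter fun i : Fin n => i.val < s).card = s := by
      rw [Fin.card_filter_val_lt]; omega
    rw [this]
  have cT : ((Finset.univ.filter fun i : Fin n => ¬ i.val < s).card : ℝ) = n - s := by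
    have h1 := Finset.card_filter_add_card_filter_not (s := (Finset.univ : Finset (Fin n)))
      (fun i : Fin n => i.val < s)
    rw [Finset.card_univ, Fintype.card_fin] at h1
    have h2 : ((Finset.univ.filter fun i : Fin n => i.val < s).card : ℝ) +
      ((Finset.univ.filter fun i : Fin n => ¬ i.val < s).card : ℝ) = n := by exact_mod_cast h1
    linarith
  have hsum : ∀ (p q : ℝ), (∑ i : Fin n, if i.val < s then p else q) = s * p + (n - s) * q := by
    intro p q
    rw [Finset.sum_ite, Finset.sum_const, Finset.sum_const, nsmul_eq_mul, nsmul_eq_mul, cS, cT]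
  have hN : ∑ i, x i ^ 2 = s * l ^ 2 + (n - s) * (s : ℝ) ^ 2 := by
    rw [← hsum]
    refine Finset.sum_congr rfl fun i _ => ?_
    simp only [hx]; split_ifs <;> rfl
  -- row sums
  have rowS : ∀ i : Fin n, i.val < s → (∑ j, if H.Adj i j then x j else 0) =
      (k - 1) * l + (n - s) * s := by
    intro i hi
    obtain ⟨F, hF, hF'⟩ := hdeg i.val hi
    have e : ∀ j : Fin n, (if H.Adj i j then x j else 0) =
        (if j.val ∈ F then l else 0) + (if j.val < s then 0 else (s : ℝ)) := by
      intro j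
      by_cases hj : j.val < s
      · by_cases hr : R i.val j.val
        · have h1 : H.Adj i j := Or.inr (Or.inr (Or.inl ⟨hi, hj, hr⟩))
          have h2 : j.val ∈ F := (hF' _).2 ⟨hj, hr⟩
          simp [hx, h1, h2, hj]
        · have h1 : ¬ H.Adj i j := by
            rintro (h | h | h | h | h)
            · omega
            · omega
            · exact hr h.2.2
            · omega
            · omega
          have h2 : j.val ∉ F := fun h => hr ((hF' _).1 h).2
          simp [h1, h2, hj]
      · have h1 : H.Adj i j := Or.inl ⟨hi, by omega⟩
        have h2 : j.val ∉ F := fun h => hj ((hF' _).1 h).1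
        simp [hx, h1, h2, hj]
    simp only [e, Finset.sum_add_distrib]
    rw [hsum 0 s, ← Finset.sum_filter, Finset.sum_const, nsmul_eq_mul]
    have hc : (Finset.univ.filter fun j : Fin n => j.val ∈ F).card = k - 1 := by
      rw [← hF]
      apply Finset.card_bij (fun (j : Fin n) _ => j.val)
      · intro j hj; simpa using hj
      · intro j _ j' _ h; exact Fin.ext h
      · intro j hj
        have := ((hF' _).1 hj).1
        exact ⟨⟨j, by omega⟩, by simpa using hj, rfl⟩
    rw [hc, Nat.cast_sub (by omega)]
    push_cast; ring
  have rowT : ∀ i : Fin n, ¬ i.val < s → s * l + (if i.val = s ∨ i.val = s + 1 then (s : ℝ) else 0) ≤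
      (∑ j, if H.Adj i j then x j else 0) := by
    intro i hi
    have base : (s : ℝ) * l = ∑ j : Fin n, if j.val < s then l else 0 := by
      rw [hsum]; ring
    have hspec : ∀ w : Fin n, ¬ w.val < s → H.Adj i w → s * l + (s : ℝ) ≤
        (∑ j, if H.Adj i j then x j else 0) := by
      intro w hw hiw
      have : (s : ℝ) = ∑ j : Fin n, if j = w then (s : ℝ) else 0 := by simp
      have e0 : s * l + (s : ℝ) = ∑ j : Fin n,
          ((if j.val < s then l else 0) + (if j = w then (s : ℝ) else 0)) := by
        rw [Finset.sum_add_distrib, ← base, ← this]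
      rw [e0]
      refine Finset.sum_le_sum fun j _ => ?_
      by_cases hj : j.val < s
      · have h1 : H.Adj i j := Or.inr (Or.inl ⟨hj, by omega⟩)
        have h2 : j ≠ w := by rintro rfl; exact hw hj
        simp [hx, h1, h2, hj]
      · by_cases hjw : j = w
        · subst hjw; simp [hx, hj, hiw]
        · simp only [hj, hjw, if_false, hx]
          split_ifs <;> simp
    by_cases h1 : i.val = s
    · have := hspec ⟨s + 1, by omega⟩ (by simp)
        (Or.inr (Or.inr (Or.inr (Or.inl ⟨h1, rfl⟩))))
      simpa [h1] using this
    · by_cases h2 : i.val = s + 1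
      · have := hspec ⟨s, by omega⟩ (by simp)
          (Or.inr (Or.inr (Or.inr (Or.inr ⟨h2, rfl⟩))))
        simpa [h2] using this
      · rw [if_neg (by tauto), add_zero, base]
        refine Finset.sum_le_sum fun j _ => ?_
        by_cases hj : j.val < s
        · have h1 : H.Adj i j := Or.inr (Or.inl ⟨hj, by omega⟩)
          simp [hx, h1, hj]
        · simp only [hj, if_false, hx]
          split_ifs <;> simp
  have hsR : (0 : ℝ) < s := by exact_mod_cast hs
  have hquad : s * (l * ((k - 1) * l + (n - s) * s)) + (n - s) * (s * (s * l)) + 2 * (s : ℝ) ^ 2 ≤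
      ∑ i, ∑ j, if H.Adj i j then x i * x j else 0 := by
    have e2 : (2 : ℝ) * (s : ℝ) ^ 2 = ∑ i : Fin n,
        if i.val = s ∨ i.val = s + 1 then (s : ℝ) ^ 2 else 0 := by
      rw [← Finset.sum_filter, Finset.sum_const, nsmul_eq_mul]
      have : (Finset.univ.filter fun i : Fin n => i.val = s ∨ i.val = s + 1) =
          {⟨s, by omega⟩, ⟨s + 1, by omega⟩} := by
        ext i; simp [Fin.ext_iff]
      rw [this, Finset.card_pair (by simp [Fin.ext_iff])]
      norm_num
    rw [e2, ← hsum, ← Finset.sum_add_distrib]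
    refine Finset.sum_le_sum fun i _ => ?_
    have e3 : (∑ j, if H.Adj i j then x i * x j else 0) =
        x i * ∑ j, if H.Adj i j then x j else 0 := by
      rw [Finset.mul_sum]
      refine Finset.sum_congr rfl fun j _ => ?_
      split_ifs <;> simp
    rw [e3]
    by_cases hi : i.val < s
    · rw [rowS i hi, if_neg (show ¬ (i.val = s ∨ i.val = s + 1) by omega)]
      simp [hx, hi]
    · have h1 := mul_le_mul_of_nonneg_left (rowT i hi) hsR.le
      have h2 : x i = s := by simp [hx, hi]
      rw [h2, if_neg hi]
      refine le_trans (le_of_eq ?_) h1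
      split_ifs <;> ring
  have h := hquad.trans hmain
  rw [hN] at h
  apply le_of_mul_le_mul_left _ hsR
  refine le_trans (le_of_eq ?_) (h.trans (le_of_eq ?_))
  · linear_combination (s * l) * hl
  · ring

theorem aux_num (n s d a b C L : ℝ) (ha0 : 0 ≤ a) (hb0 : 0 ≤ b) (hC0 : 0 ≤ C)
    (hs1R : n ≤ 2 * s + 2) (hs2R : 2 * s ≤ n + 1) (hnbig : 100 ≤ n) (hCn : 32 * C < n)
    (hd2 : 2 ≤ d) (hnd : 8 + 4 * d ≤ n)
    (hlow : ∀ l, l ^ 2 = d * l + s * (n - s) →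
      l * (l ^ 2 + (n - s) * s) + 2 * s ≤ L * (l ^ 2 + (n - s) * s))
    (hup : L ≤ (a + b) / 2 + √((a - b) ^ 2 / 4 + n ^ 2 / 4) + 8 * C / n) :
    ¬ (a + b ≤ d - 1) ∧ (C = 0 → ¬ (a + b ≤ d)) := by
  have hnpos : 0 < n := by linarith
  have hspos : 0 < s := by linarith
  obtain ⟨t, ht⟩ : ∃ t : ℝ, t = n - s := ⟨_, rfl⟩
  rw [← ht] at hlow
  have hst1 : n ^ 2 / 4 ≤ s * t + 1 := by
    have h1 : 0 ≤ (2 * s + 2 - n) * (n + 2 - 2 * s) := mul_nonneg (by linarith) (by linarith)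
    rw [ht]; linarith
  have hst2 : s * t ≤ n ^ 2 / 4 := by rw [ht]; linarith [sq_nonneg (n - 2 * s)]
  have hst0 : 0 ≤ s * t := mul_nonneg hspos.le (by linarith)
  obtain ⟨ρ, hρ⟩ : ∃ ρ : ℝ, ρ = √(d ^ 2 / 4 + s * t) := ⟨_, rfl⟩
  have hρ0 : 0 ≤ ρ := hρ ▸ Real.sqrt_nonneg _
  have hρ2 : ρ ^ 2 = d ^ 2 / 4 + s * t := by rw [hρ]; exact Real.sq_sqrt (by positivity)
  have hρlow : (n - 2) / 2 ≤ ρ := by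
    refine (abs_le_of_sq_le_sq' ?_ hρ0).2
    rw [hρ2]
    linarith [sq_nonneg d]
  have hρup : ρ ≤ d / 2 + n / 2 := by
    refine (abs_le_of_sq_le_sq' ?_ (by positivity)).2
    rw [hρ2]
    have : 0 ≤ d * n := by positivity
    linarith
  obtain ⟨l, hl⟩ : ∃ l : ℝ, l = d / 2 + ρ := ⟨_, rfl⟩
  have hl2 : l ^ 2 = d * l + s * t := by rw [hl]; linear_combination hρ2
  have hlow := hlow l hl2
  obtain ⟨D, hD⟩ : ∃ D : ℝ, D = l ^ 2 + t * s := ⟨_, rfl⟩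
  rw [← hD] at hlow
  have hDpos : 0 < D := by
    have : 0 < l := by rw [hl]; linarith
    have : 0 < l ^ 2 := by positivity
    rw [hD]; linarith [mul_comm t s]
  set σ := √((a - b) ^ 2 / 4 + n ^ 2 / 4) with hσ
  have hσ0 : 0 ≤ σ := Real.sqrt_nonneg _
  have hσ2 : σ ^ 2 = (a - b) ^ 2 / 4 + n ^ 2 / 4 := Real.sq_sqrt (by positivity)
  have hσρ : a + b ≤ d → σ ^ 2 ≤ ρ ^ 2 + 1 := by
    intro h1
    have h2 : (a - b) ^ 2 ≤ d ^ 2 := by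
      apply sq_le_sq'
      · linarith
      · linarith
    rw [hσ2, hρ2]; linarith
  constructor
  · intro h1
    have h2 := hσρ (by linarith)
    have h3 : σ ≤ ρ + 1 / 4 := by
      refine (abs_le_of_sq_le_sq' ?_ (by positivity)).2
      linarith
    have h4 : 8 * C / n < 1 / 4 := by
      rw [div_lt_iff₀ hnpos]; linarith
    have h5 : l ≤ L := by
      apply le_of_mul_le_mul_right _ hDpos
      linarith
    linarith
  · intro hC h1
    have h2 := hσρ h1
    subst hC
    have h3 : L ≤ d / 2 + σ := by
      have : 8 * (0 : ℝ) / n = 0 := by simp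
      linarith
    have h4 : 2 * s ≤ (σ - ρ) * D := by
      have := mul_le_mul_of_nonneg_right h3 hDpos.le
      rw [hl] at hlow
      linarith
    have h5 : 0 < σ - ρ := by
      by_contra hneg
      push Not at hneg
      have := mul_nonpos_of_nonpos_of_nonneg hneg hDpos.le
      linarith
    have h6 : (σ - ρ) * (σ + ρ) ≤ 1 := by linarith
    have h7 : 2 * s * (σ + ρ) ≤ D := by
      calc 2 * s * (σ + ρ) ≤ (σ - ρ) * D * (σ + ρ) := by gcongr
        _ = ((σ - ρ) * (σ + ρ)) * D := by ring
        _ ≤ 1 * D := by gcongr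
        _ = D := one_mul D
    have h8 : (n - 2) * (n - 2) ≤ 2 * s * (σ + ρ) := by
      apply mul_le_mul <;> linarith
    have h9 : D ≤ d ^ 2 + d * n / 2 + n ^ 2 / 2 := by
      have : d * l ≤ d * (d + n / 2) := by
        apply mul_le_mul_of_nonneg_left _ (by linarith)
        rw [hl]; linarith
      rw [hD, hl2]; linarith
    have h10 : 0 ≤ n * (n - (8 + 4 * d)) := mul_nonneg hnpos.le (by linarith)
    have h11 : 0 ≤ d * (n - (8 + 4 * d)) := mul_nonneg (by linarith) (by linarith)
    have h12 : 0 ≤ d ^ 2 := sq_nonneg d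
    linarith

/-- If at most `C` edges can be removed from `G` so that `G[S]` has
maximum degree at most `a` and `G[T]` has maximum degree at most `b`, then
`a + b ≥ k - 1`; and if `C = 0`, then `a + b ≥ k`. -/
theorem internal_degree_sum (k C a b : ℕ) (hk : 3 ≤ k) :
    ∃ N : ℕ, ∀ n : ℕ, N ≤ n → ∀ G : SimpleGraph (Fin n), IsSpexWheel (2 * k + 1) G →
      ∀ S T : Finset (Fin n), IsMaxCut G S T →
        (∃ Es : Finset (Sym2 (Fin n)),
          Es ⊆ (by classical exact G.edgeFinset) ∧ Es.card ≤ C ∧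
          (∀ v ∈ S, degIn (G.deleteEdges (↑Es : Set (Sym2 (Fin n)))) S v ≤ a) ∧
          (∀ v ∈ T, degIn (G.deleteEdges (↑Es : Set (Sym2 (Fin n)))) T v ≤ b)) →
        k - 1 ≤ a + b ∧ (C = 0 → k ≤ a + b) := by
  refine ⟨8 * k * k + 32 * C + 4 * k + 100, ?_⟩
  intro n hn G hG S T hcut hEs
  obtain ⟨Es, -, hEC, hS, hT⟩ := hEs
  obtain ⟨rfl, -⟩ := hcut
  have hkk : 3 * k ≤ k * k := Nat.mul_le_mul_right k hk
  have hn' : 8 * (k * k) + 32 * C + 4 * k + 100 ≤ n := by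
    have : 8 * k * k = 8 * (k * k) := by ring
    omega
  have hup := aux_upper (by omega) G S a b C Es hEC hS hT
  obtain ⟨s, hs⟩ : ∃ s, s = 2 * ((n + 1) / 4) := ⟨_, rfl⟩
  have hseven : Even s := ⟨(n + 1) / 4, by omega⟩
  have hsbig : k * (2 * k - 2) ≤ s := by
    have h1 : k * (2 * k - 2) ≤ k * (2 * k) := Nat.mul_le_mul_left _ (by omega)
    have h2 : k * (2 * k) = 2 * (k * k) := by ring
    omega
  have hs1 : n ≤ 2 * s + 2 := by omega
  have hs2 : 2 * s ≤ n + 1 := by omega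
  obtain ⟨R, c, hR, hR', hRc, hdeg, hblk⟩ := aux_reg k s hk hseven hsbig
  have hH := hG.2 _ (aux_wheelFree n s k hk R hR hR' c hRc hdeg hblk)
  have hnat1 : 32 * C < n := by omega
  have hnat2 : 4 + 4 * k ≤ n := by omega
  have hnat3 : 100 ≤ n := by omega
  have hkR : (3 : ℝ) ≤ k := by exact_mod_cast hk
  have hnR2 : (4 : ℝ) + 4 * k ≤ n := by exact_mod_cast hnat2
  obtain ⟨h1, h2⟩ := aux_num n s (k - 1) a b C (lam1 (auxH n s R hR hR')) (by positivity)
    (by positivity) (by positivity) (by exact_mod_cast hs1) (by exact_mod_cast hs2)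
    (by exact_mod_cast hnat3) (by exact_mod_cast hnat1) (by linarith) (by linarith)
    (fun l hl => aux_lower n s k hk R hR hR' (by omega) (by omega) hdeg l hl)
    (hH.trans hup)
  constructor
  · by_contra hcon
    apply h1
    have : a + b + 2 ≤ k := by omega
    have : (a : ℝ) + b + 2 ≤ k := by exact_mod_cast this
    linarith
  · intro hC
    by_contra hcon
    apply h2 (by exact_mod_cast hC)
    have : a + b + 1 ≤ k := by omega
    have : (a : ℝ) + b + 1 ≤ k := by exact_mod_cast this
    linarith
end

section
/- Let k ≥ 3 be an integer. For all sufficiently large n, if G is an n-vertex W_{2k+1}-free simple graph attaining the maximum spectral radius among all n-vertex W_{2k+1}-free graphs and V(G) = S ⊔ T is a maximum cut of G, then there exists a vertex v with internal degree at least k/2; that is, there is v ∈ S with 2·d_S(v) ≥ k or v ∈ T with 2·d_T(v) ≥ k. -/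
/-- Upper bound on eigenvalues. -/
lemma eig_upper {n : ℕ} (G : SimpleGraph (Fin n)) [DecidableRel G.Adj] (S : Finset (Fin n)) (D : ℝ)
    (hD : 0 ≤ D)
    (hS : ∀ v ∈ S, ((S.filter fun u => G.Adj v u).card : ℝ) ≤ D)
    (hT : ∀ v ∈ Sᶜ, (((Sᶜ).filter fun u => G.Adj v u).card : ℝ) ≤ D)
    (μ : ℝ) (hμ : Module.End.HasEigenvalue (Matrix.toLin' (G.adjMatrix ℝ)) μ) :
    μ ≤ n / 2 + D := by
  obtain ⟨x, hx⟩ := hμ.exists_hasEigenvector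
  have hxe := hx.apply_eq_smul
  have hx0 := hx.2
  by_contra hlt
  push Not at hlt
  have hn0 : (0:ℝ) ≤ n := Nat.cast_nonneg n
  have hμD : 0 < μ - D := by linarith
  have hμ0 : 0 < μ := by linarith
  have ex : ∀ U : Finset (Fin n), ∃ p : ℝ, 0 ≤ p ∧ (∀ v ∈ U, |x v| ≤ p) ∧
      (p = 0 ∨ ∃ v ∈ U, |x v| = p) := by
    intro U
    rcases U.eq_empty_or_nonempty with rfl | hU
    · exact ⟨0, le_rfl, by simp, Or.inl rfl⟩
    · obtain ⟨v, hv, h⟩ := U.exists_max_image (fun v => |x v|) hU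
      exact ⟨|x v|, abs_nonneg _, h, Or.inr ⟨v, hv, rfl⟩⟩
  have key : ∀ v, μ * |x v| ≤ ∑ u ∈ G.neighborFinset v, |x u| := by
    intro v
    have h := congrFun hxe v
    rw [Matrix.toLin'_apply, SimpleGraph.adjMatrix_mulVec_apply] at h
    simp only [Pi.smul_apply, smul_eq_mul] at h
    calc μ * |x v| = |μ * x v| := by rw [abs_mul, abs_of_pos hμ0]
      _ = |∑ u ∈ G.neighborFinset v, x u| := by rw [h]
      _ ≤ _ := Finset.abs_sum_le_sum_abs _ _
  have step : ∀ U : Finset (Fin n), ∀ p q : ℝ, 0 ≤ p → 0 ≤ q → (∀ v ∈ U, |x v| ≤ p) →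
      (∀ v ∈ Uᶜ, |x v| ≤ q) → (∀ v ∈ U, ((U.filter fun u => G.Adj v u).card : ℝ) ≤ D) →
      (p = 0 ∨ ∃ v ∈ U, |x v| = p) → (μ - D) * p ≤ (Uᶜ.card : ℝ) * q := by
    intro U p q hp hq hUp hUq hUD hat
    rcases hat with rfl | ⟨v, hv, rfl⟩
    · simp; positivity
    · have h1 := key v
      have h2 : ∑ u ∈ G.neighborFinset v, |x u| =
          ∑ u ∈ U.filter (fun u => G.Adj v u), |x u| + ∑ u ∈ Uᶜ.filter (fun u => G.Adj v u), |x u| := by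
        rw [← Finset.sum_union]
        · apply Finset.sum_congr _ (fun _ _ => rfl)
          ext u
          simp only [SimpleGraph.mem_neighborFinset, Finset.mem_union, Finset.mem_filter,
            Finset.mem_compl]
          tauto
        · rw [Finset.disjoint_left]
          intro u
          simp only [Finset.mem_filter, Finset.mem_compl]
          tauto
      have h3 : ∑ u ∈ U.filter (fun u => G.Adj v u), |x u| ≤ D * |x v| := by
        calc _ ≤ ∑ u ∈ U.filter (fun u => G.Adj v u), |x v| :=
              Finset.sum_le_sum (fun u hu => hUp u (Finset.mem_filter.1 hu).1)
          _ = ((U.filter fun u => G.Adj v u).card : ℝ) * |x v| := by simp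
          _ ≤ _ := mul_le_mul_of_nonneg_right (hUD v hv) hp
      have h4 : ∑ u ∈ Uᶜ.filter (fun u => G.Adj v u), |x u| ≤ (Uᶜ.card : ℝ) * q := by
        calc _ ≤ ∑ u ∈ Uᶜ, |x u| :=
              Finset.sum_le_sum_of_subset_of_nonneg (Finset.filter_subset _ _)
                (fun _ _ _ => abs_nonneg _)
          _ ≤ ∑ u ∈ Uᶜ, q := Finset.sum_le_sum (fun u hu => hUq u hu)
          _ = _ := by simp
      linarith
  obtain ⟨p, hp, hp1, hp2⟩ := ex S
  obtain ⟨q, hq, hq1, hq2⟩ := ex Sᶜ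
  have e1 := step S p q hp hq hp1 hq1 hS hp2
  have e2 := step Sᶜ q p hq hp hq1 (by simpa using hp1) hT hq2
  rw [compl_compl] at e2
  have hcard : (S.card : ℝ) + (Sᶜ.card : ℝ) = n := by
    have := Finset.card_add_card_compl S
    rw [Fintype.card_fin] at this
    exact_mod_cast this
  set s : ℝ := (S.card : ℝ)
  set t : ℝ := (Sᶜ.card : ℝ)
  have hs : 0 ≤ s := Nat.cast_nonneg _
  have ht : 0 ≤ t := Nat.cast_nonneg _
  have hst : s * t < (μ - D) ^ 2 := by nlinarith [sq_nonneg (s - t)]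
  have f1 : (μ - D) ^ 2 * p ≤ s * t * p := by
    calc (μ - D) ^ 2 * p = (μ - D) * ((μ - D) * p) := by ring
      _ ≤ (μ - D) * (t * q) := mul_le_mul_of_nonneg_left e1 hμD.le
      _ = t * ((μ - D) * q) := by ring
      _ ≤ t * (s * p) := mul_le_mul_of_nonneg_left e2 ht
      _ = _ := by ring
  have f2 : (μ - D) ^ 2 * q ≤ s * t * q := by
    calc (μ - D) ^ 2 * q = (μ - D) * ((μ - D) * q) := by ring
      _ ≤ (μ - D) * (s * p) := mul_le_mul_of_nonneg_left e2 hμD.le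
      _ = s * ((μ - D) * p) := by ring
      _ ≤ s * (t * q) := mul_le_mul_of_nonneg_left e1 hs
      _ = _ := by ring
  have p0 : p = 0 := by
    by_contra h
    have : 0 < p := lt_of_le_of_ne hp (Ne.symm h)
    nlinarith
  have q0 : q = 0 := by
    by_contra h
    have : 0 < q := lt_of_le_of_ne hq (Ne.symm h)
    nlinarith
  apply hx0
  ext v
  by_cases hv : v ∈ S
  · have := hp1 v hv
    rw [p0] at this
    exact abs_eq_zero.1 (le_antisymm this (abs_nonneg _))
  · have := hq1 v (Finset.mem_compl.2 hv)
    rw [q0] at this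
    exact abs_eq_zero.1 (le_antisymm this (abs_nonneg _))

/-- Lower bound on the spectral radius via an explicit eigenvector. -/
lemma lam_lower_s12 {n : ℕ} (G : SimpleGraph (Fin n)) [inst : DecidableRel G.Adj] (A : Finset (Fin n))
    (d : ℕ) (hA0 : 0 < A.card)
    (hAB : ∀ u ∈ A, ∀ v ∉ A, G.Adj u v) (hB : ∀ u ∉ A, ∀ v ∉ A, ¬ G.Adj u v)
    (hA : ∀ u ∈ A, (A.filter fun v => G.Adj u v).card = d) (lam : ℝ) (hpos : 0 < lam)
    (hlam : lam ^ 2 = d * lam + A.card * (Aᶜ).card) :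
    lam ≤ lam1 G := by
  obtain rfl : inst = fun a b => Classical.propDecidable (G.Adj a b) := Subsingleton.elim _ _
  classical
  unfold lam1
  apply le_csSup
  · refine Set.Finite.bddAbove ?_
    exact Module.End.finite_hasEigenvalue _
  · apply Module.End.hasEigenvalue_of_hasEigenvector
      (x := fun v => if v ∈ A then lam else (A.card : ℝ))
    refine ⟨Module.End.mem_eigenspace_iff.2 ?_, ?_⟩
    · ext v
      rw [Matrix.toLin'_apply, SimpleGraph.adjMatrix_mulVec_apply]
      simp only [Pi.smul_apply, smul_eq_mul]
      by_cases hv : v ∈ A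
      · have h2 : ∀ N : Finset (Fin n), (∀ u, u ∈ N ↔ G.Adj v u) →
            N = A.filter (fun u => G.Adj v u) ∪ Aᶜ := by
          intro N hN
          ext u
          simp only [hN, Finset.mem_union, Finset.mem_filter, Finset.mem_compl]
          by_cases hu : u ∈ A
          · simp [hu]
          · simp [hu, hAB v hv u hu]
        rw [h2 _ (fun u => SimpleGraph.mem_neighborFinset _ _ _), Finset.sum_union]
        · have s1 : ∑ u ∈ A.filter (fun u => G.Adj v u), (if u ∈ A then lam else (A.card : ℝ))
              = d * lam := by
            rw [Finset.sum_congr rfl (g := fun _ => lam)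
              (fun u hu => if_pos (Finset.mem_filter.1 hu).1)]
            simp [hA v hv]
          have s2 : ∑ u ∈ Aᶜ, (if u ∈ A then lam else (A.card : ℝ))
              = Aᶜ.card * A.card := by
            rw [Finset.sum_congr rfl (g := fun _ => (A.card : ℝ))
              (fun u hu => if_neg (Finset.mem_compl.1 hu))]
            simp
          rw [s1, s2, if_pos hv]
          linarith
        · rw [Finset.disjoint_left]
          intro u
          simp only [Finset.mem_filter, Finset.mem_compl]
          tauto
      · have h2 : ∀ N : Finset (Fin n), (∀ u, u ∈ N ↔ G.Adj v u) → N = A := by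
          intro N hN
          ext u
          rw [hN]
          by_cases hu : u ∈ A
          · simp [hu, (hAB u hu v hv).symm]
          · simp [hu, hB v hv u hu]
        rw [h2 _ (fun u => SimpleGraph.mem_neighborFinset _ _ _), Finset.sum_congr rfl (g := fun _ => lam) (fun u hu => if_pos hu), if_neg hv]
        simp [mul_comm]
    · intro h
      obtain ⟨v, hv⟩ := Finset.card_pos.1 hA0
      have := congrFun h v
      simp [hv] at this
      exact hpos.ne' this

lemma wheel_free {n k : ℕ} (hk : 3 ≤ k) (G : SimpleGraph (Fin n)) [DecidableRel G.Adj]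
    (A : Finset (Fin n)) (hB : ∀ u ∉ A, ∀ v ∉ A, ¬ G.Adj u v)
    (hA : ∀ u ∈ A, (A.filter fun v => G.Adj u v).card = k - 1)
    {ι : Type} (c : Fin n → ι) (hc : ∀ u ∈ A, ∀ v ∈ A, G.Adj u v → c u = c v)
    (hcc : ∀ U : Finset (Fin n), U ⊆ A → (∀ u ∈ U, ∀ v ∈ U, c u = c v) → U.card < 2 * k) :
    WheelFree (2 * k + 1) G := by
  rintro ⟨φ, hφ⟩
  have hub : ∀ i : ℕ, ∀ hi : i < 2 * k, G.Adj (φ ⟨0, by omega⟩) (φ ⟨i + 1, by omega⟩) := by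
    intro i hi
    apply hφ
    refine ⟨by simp [Fin.ext_iff], Or.inl rfl⟩
  have cyc : ∀ i : ℕ, ∀ hi : i + 1 < 2 * k,
      G.Adj (φ ⟨i + 1, by omega⟩) (φ ⟨i + 2, by omega⟩) := by
    intro i hi
    apply hφ
    refine ⟨by simp [Fin.ext_iff], Or.inr (Or.inr (Or.inl rfl))⟩
  by_cases h0 : φ ⟨0, by omega⟩ ∈ A
  · let g : Fin k → Fin n := fun j =>
      if φ ⟨2 * j.1 + 1, by omega⟩ ∈ A then φ ⟨2 * j.1 + 1, by omega⟩
      else φ ⟨2 * j.1 + 2, by omega⟩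
    have hg : ∀ j : Fin k, g j ∈ A.filter fun v => G.Adj (φ ⟨0, by omega⟩) v := by
      intro j
      have hj := j.2
      rw [Finset.mem_filter]
      simp only [g]
      split_ifs with h
      · exact ⟨h, hub _ (by omega)⟩
      · refine ⟨?_, hub (2 * j.1 + 1) (by omega)⟩
        by_contra h'
        exact hB _ h _ h' (cyc (2 * j.1) (by omega))
    have hgi : Function.Injective g := by
      intro i j hij
      simp only [g] at hij
      split_ifs at hij <;> (have := φ.injective hij; simp only [Fin.mk.injEq] at this; omega)
    have := Finset.card_le_card_of_injOn g (s := Finset.univ) (fun j _ => hg j) hgi.injOn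
    rw [hA _ h0, Finset.card_univ, Fintype.card_fin] at this
    omega
  · have hin : ∀ i : ℕ, ∀ hi : i < 2 * k, φ ⟨i + 1, by omega⟩ ∈ A := by
      intro i hi
      by_contra h
      exact hB _ h0 _ h (hub i hi)
    have hcol : ∀ i : ℕ, ∀ hi : i < 2 * k, c (φ ⟨i + 1, by omega⟩) = c (φ ⟨1, by omega⟩) := by
      intro i
      induction i with
      | zero => intro hi; rfl
      | succ i ih =>
        intro hi
        rw [← ih (by omega)]
        exact (hc _ (hin _ (by omega)) _ (hin _ hi) (cyc i hi)).symm
    have := hcc (Finset.univ.image fun i : Fin (2 * k) => φ ⟨i.1 + 1, by omega⟩)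
      (by
        intro u hu
        obtain ⟨i, -, rfl⟩ := Finset.mem_image.1 hu
        exact hin _ i.2)
      (by
        intro u hu v hv
        obtain ⟨i, -, rfl⟩ := Finset.mem_image.1 hu
        obtain ⟨j, -, rfl⟩ := Finset.mem_image.1 hv
        rw [hcol _ i.2, hcol _ j.2])
    rw [Finset.card_image_of_injective] at this
    · simp at this
    · intro i j hij
      have := φ.injective hij
      simp only [Fin.mk.injEq] at this
      omega

/-- Vertices of the extremal construction. -/
abbrev BlockV (x y k b : ℕ) : Type := ((Fin x × Fin k) ⊕ (Fin y × Fin (k + 2))) ⊕ Fin b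

/-- The extremal construction: blocks in one part, independent other part. -/
def blockGraph (x y k b : ℕ) :
    SimpleGraph (BlockV x y k b) where
  Adj u v := match u, v with
    | .inl (.inl p), .inl (.inl q) => p.1 = q.1 ∧ p.2 ≠ q.2
    | .inl (.inr p), .inl (.inr q) =>
      p.1 = q.1 ∧ q.2 ≠ p.2 ∧ q.2 ≠ p.2 + 1 ∧ p.2 ≠ q.2 + 1
    | .inl _, .inr _ => True
    | .inr _, .inl _ => True
    | _, _ => False
  symm := by
    constructor
    rintro ((u | u) | u) ((v | v) | v) h <;> simp only at h ⊢ <;> grind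
  loopless := by
    constructor
    rintro ((u | u) | u) h <;> simp at h

lemma block_col {x y k b : ℕ} (u v : BlockV x y k b) (hu : u.isLeft) (hv : v.isLeft)
    (h : (blockGraph x y k b).Adj u v) :
    (Sum.map (Sum.map Prod.fst Prod.fst) id u : (Fin x ⊕ Fin y) ⊕ Fin b) =
      Sum.map (Sum.map Prod.fst Prod.fst) id v := by
  rcases u with (u | u) | u
  · rcases v with (v | v) | v
    · have h1 : u.1 = v.1 := h.1
      simp [h1]
    · exact h.elim
    · simp at hv
  · rcases v with (v | v) | v
    · exact h.elim
    · have h1 : u.1 = v.1 := h.1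
      simp [h1]
    · simp at hv
  · simp at hu

lemma construction (x y k b n : ℕ) (hk : 3 ≤ k) (hn : x * k + y * (k + 2) + b = n) :
    ∃ (G : SimpleGraph (Fin n)) (_ : DecidableRel G.Adj) (A : Finset (Fin n)),
      A.card = x * k + y * (k + 2) ∧ (∀ u ∈ A, ∀ v ∉ A, G.Adj u v) ∧
      (∀ u ∉ A, ∀ v ∉ A, ¬ G.Adj u v) ∧
      (∀ u ∈ A, (A.filter fun v => G.Adj u v).card = k - 1) ∧
      WheelFree (2 * k + 1) G := by
  classical
  have e : Fin n ≃ BlockV x y k b := Fintype.equivOfCardEq (by simp [hn])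
  let H : SimpleGraph (BlockV x y k b) := blockGraph x y k b
  let col : (BlockV x y k b) → (Fin x ⊕ Fin y) ⊕ Fin b :=
    Sum.map (Sum.map Prod.fst Prod.fst) id
  let A : Finset (Fin n) := Finset.univ.filter fun v => (e v).isLeft
  have hmem : ∀ v, v ∈ A ↔ (e v).isLeft := by simp [A]
  have hB : ∀ u ∉ A, ∀ v ∉ A, ¬ (H.comap e).Adj u v := by
    intro u hu v hv
    rw [hmem] at hu hv
    rw [SimpleGraph.comap_adj]
    generalize e u = u' at *
    generalize e v = v' at *
    rcases u' with u' | u' <;> rcases v' with v' | v' <;> simp [H, blockGraph] at *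
  have hAd : ∀ u ∈ A, (A.filter fun v => (H.comap e).Adj u v).card = k - 1 := by
    intro u hu
    rw [hmem] at hu
    have h1 : (A.filter fun v => (H.comap e).Adj u v).card =
        (Finset.univ.filter fun v : BlockV x y k b => v.isLeft ∧ H.Adj (e u) v).card := by
      rw [← Finset.card_map e.toEmbedding]
      congr 1
      ext v
      simp only [Finset.mem_map, Finset.mem_filter, hmem, SimpleGraph.comap_adj,
        Finset.mem_univ, true_and, Equiv.coe_toEmbedding]
      constructor
      · rintro ⟨w, hw, rfl⟩
        exact hw
      · intro h
        exact ⟨e.symm v, by simpa using h, by simp⟩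
    rw [h1]
    generalize e u = u' at *
    rcases u' with (⟨i, p⟩ | ⟨i, p⟩) | u'
    · have h2 : (Finset.univ.filter fun v : BlockV x y k b => v.isLeft ∧ H.Adj (.inl (.inl (i, p))) v) =
          (Finset.univ.erase p).image fun q : Fin k => (.inl (.inl (i, q)) : BlockV x y k b) := by
        ext v
        rcases v with (⟨j, q⟩ | ⟨j, q⟩) | v <;> simp [H, blockGraph]
        clear * -
        grind
      rw [h2, Finset.card_image_of_injective]
      · simp
      · intro q q' h
        simpa using h
    · have h2 : (Finset.univ.filter fun v : BlockV x y k b => v.isLeft ∧ H.Adj (.inl (.inr (i, p))) v) =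
          (({p, p + 1, p - 1} : Finset (Fin (k + 2)))ᶜ).image
            fun q : Fin (k + 2) => (.inl (.inr (i, q)) : BlockV x y k b) := by
        ext v
        rcases v with (⟨j, q⟩ | ⟨j, q⟩) | v <;> simp [H, blockGraph]
        clear * -
        have : p = q + 1 ↔ q = p - 1 := by rw [eq_sub_iff_add_eq, eq_comm]
        grind
      rw [h2, Finset.card_image_of_injective]
      · rw [Finset.card_compl, Finset.card_eq_three.2 ⟨p, p + 1, p - 1, ?_, ?_, ?_, rfl⟩]
        · simp
        · simp
        · rw [ne_eq, eq_sub_iff_add_eq]; simp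
        · intro h
          rw [eq_sub_iff_add_eq, add_assoc, add_eq_left] at h
          have h' := congrArg Fin.val h
          rw [Fin.val_add] at h'
          simp at h'
          rw [Nat.mod_eq_of_lt (by omega)] at h'
          omega
      · intro q q' h
        simpa using h
    · simp at hu
  refine ⟨H.comap e, inferInstance, A, ?_, ?_, hB, hAd, ?_⟩
  · have h1 : Aᶜ.card = b := by
      rw [← Finset.card_map e.toEmbedding]
      have : Aᶜ.map e.toEmbedding = Finset.univ.image (fun i : Fin b => (.inr i : BlockV x y k b)) := by
        ext v
        simp only [Finset.mem_map, Finset.mem_compl, hmem, Equiv.coe_toEmbedding,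
          Finset.mem_image, Finset.mem_univ, true_and]
        constructor
        · rintro ⟨w, hw, rfl⟩
          rcases h : e w with z | z
          · simp [h] at hw
          · exact ⟨z, rfl⟩
        · rintro ⟨z, rfl⟩
          exact ⟨e.symm (.inr z), by simp, by simp⟩
      rw [this, Finset.card_image_of_injective _ Sum.inr_injective]
      simp
    have h2 := Finset.card_add_card_compl A
    rw [Fintype.card_fin] at h2
    omega
  · intro u hu v hv
    rw [hmem] at hu hv
    rw [SimpleGraph.comap_adj]
    generalize e u = u' at *
    generalize e v = v' at *
    rcases u' with u' | u' <;> rcases v' with v' | v' <;> simp [H, blockGraph] at *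
  · apply wheel_free hk (H.comap e) A hB hAd (fun v => col (e v))
    · intro u hu v hv h
      rw [hmem] at hu hv
      rw [SimpleGraph.comap_adj] at h
      exact block_col _ _ hu hv h
    · intro U hU hcU
      rcases U.eq_empty_or_nonempty with rfl | ⟨w, hw⟩
      · simp; omega
      · have hwA := hU hw
        rw [hmem] at hwA
        rw [← Finset.card_map e.toEmbedding]
        have hsub : ∀ v ∈ U.map e.toEmbedding, col (e w) = col v := by
          intro v hv
          obtain ⟨u, hu, rfl⟩ := Finset.mem_map.1 hv
          exact hcU w hw u hu
        generalize U.map e.toEmbedding = U' at *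
        generalize e w = w' at *
        rcases w' with (⟨i, p⟩ | ⟨i, p⟩) | w'
        · have : U' ⊆ Finset.univ.image fun q : Fin k => (.inl (.inl (i, q)) : BlockV x y k b) := by
            intro v hv
            have := hsub v hv
            rcases v with (⟨j, q⟩ | ⟨j, q⟩) | v <;> simp [col] at this ⊢
            exact this
          have := (Finset.card_le_card this).trans Finset.card_image_le
          simp at this
          omega
        · have : U' ⊆ Finset.univ.image fun q : Fin (k + 2) => (.inl (.inr (i, q)) : BlockV x y k b) := by
            intro v hv
            have := hsub v hv
            rcases v with (⟨j, q⟩ | ⟨j, q⟩) | v <;> simp [col] at this ⊢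
            exact this
          have := (Finset.card_le_card this).trans Finset.card_image_le
          simp at this
          omega
        · simp at hwA

lemma arith (k a : ℕ) (hk : 3 ≤ k) (h : k % 2 = 1 ∨ a % 2 = 0) (ha : k * (k + 2) ≤ a) :
    ∃ x y, x * k + y * (k + 2) = a := by
  have hr : a % k < k := Nat.mod_lt _ (by omega)
  have hdiv : k * (a / k) + a % k = a := Nat.div_add_mod a k
  have hq : k + 2 ≤ a / k := by
    rw [Nat.le_div_iff_mul_le (by omega)]
    linarith
  have hyz : ∃ y z, y < k ∧ y ≤ z ∧ a = 2 * y + k * z := by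
    rcases Nat.even_or_odd' (a % k) with ⟨w, hw | hw⟩
    · exact ⟨w, a / k, by omega, by omega, by omega⟩
    · rcases Nat.even_or_odd' k with ⟨l, hl | hl⟩
      · exfalso
        have : k * (a / k) = 2 * (l * (a / k)) := by rw [← mul_assoc, ← hl]
        omega
      · refine ⟨w + l + 1, a / k - 1, by omega, by omega, ?_⟩
        rw [Nat.mul_sub]
        have : k * 1 ≤ k * (a / k) := Nat.mul_le_mul_left _ (by omega)
        omega
  obtain ⟨y, z, h1, h2, h3⟩ := hyz
  obtain ⟨x, rfl⟩ := Nat.exists_eq_add_of_le h2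
  exact ⟨x, y, by rw [h3]; ring⟩

/-- There is a vertex of internal degree at least `k/2`. -/
theorem exists_internal_degree_half (k : ℕ) (hk : 3 ≤ k) :
    ∃ N : ℕ, ∀ n : ℕ, N ≤ n → ∀ G : SimpleGraph (Fin n), IsSpexWheel (2 * k + 1) G →
      ∀ S T : Finset (Fin n), IsMaxCut G S T →
        ∃ v : Fin n, (v ∈ S ∧ k ≤ 2 * degIn G S v) ∨ (v ∈ T ∧ k ≤ 2 * degIn G T v) := by
  classical
  refine ⟨2 * (k * (k + 2)), fun n hn G hG S T hST => ?_⟩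
  obtain ⟨rfl, -⟩ := hST
  by_contra hcon
  push Not at hcon
  -- upper bound
  have hup : lam1 G ≤ n / 2 + ((k : ℝ) - 1) / 2 := by
    have hk1 : (3 : ℝ) ≤ k := by exact_mod_cast hk
    have hn0 : (0 : ℝ) ≤ n := Nat.cast_nonneg n
    have hdeg : ∀ (m : ℕ), 2 * m < k → (m : ℝ) ≤ ((k : ℝ) - 1) / 2 := by
      intro m hm
      have : ((2 * m + 1 : ℕ) : ℝ) ≤ k := by exact_mod_cast hm
      push_cast at this
      linarith
    unfold lam1
    apply Real.sSup_le
    · intro μ hμ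
      refine eig_upper G S _ (by linarith) (fun v hv => hdeg _ ?_) (fun v hv => hdeg _ ?_) μ ?_
      · have := (hcon v).1 hv
        unfold degIn at this
        convert this
      · have := (hcon v).2 hv
        unfold degIn at this
        convert this
      · convert hμ
    · linarith
  -- choice of part sizes
  have hab : ∃ a b : ℕ, a + b = n ∧ k * (k + 2) ≤ a ∧ (k % 2 = 1 ∨ a % 2 = 0) ∧
      n ^ 2 < 4 * (a * b) + (k - 1) ^ 2 := by
    obtain ⟨l, rfl⟩ := Nat.exists_eq_add_of_le hk
    have hl : 3 + l - 1 = l + 2 := by omega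
    rw [hl]
    obtain ⟨m, hm⟩ := Nat.even_or_odd' n
    have hK : 1 ≤ (3 + l) * (3 + l + 2) := by nlinarith
    by_cases hc : (3 + l) % 2 = 1 ∨ m % 2 = 0
    · refine ⟨m, n - m, by omega, by omega, hc, ?_⟩
      rcases hm with rfl | rfl
      · rw [show 2 * m - m = m by omega]
        nlinarith
      · rw [show 2 * m + 1 - m = m + 1 by omega]
        nlinarith
    · have hl1 : 1 ≤ l := by omega
      have hm0 : 1 ≤ m := by omega
      refine ⟨m + 1, n - (m + 1), by omega, by omega, by omega, ?_⟩
      obtain ⟨m, rfl⟩ := Nat.exists_eq_add_of_le hm0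
      rcases hm with rfl | rfl
      · rw [show 2 * (1 + m) - (1 + m + 1) = m by omega]
        nlinarith
      · rw [show 2 * (1 + m) + 1 - (1 + m + 1) = m + 1 by omega]
        nlinarith
  obtain ⟨a, b, hn', ha, hpar, hlt⟩ := hab
  obtain ⟨x, y, hxy⟩ := arith k a hk hpar ha
  obtain ⟨H, _, A, hAc, hAB, hB, hAd, hW⟩ := construction x y k b n hk (by omega)
  rw [hxy] at hAc
  have hBc : Aᶜ.card = b := by
    have := Finset.card_add_card_compl A
    rw [Fintype.card_fin] at this
    omega
  have hcast : ((k - 1 : ℕ) : ℝ) = (k : ℝ) - 1 := by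
    rw [Nat.cast_sub (by omega)]; simp
  have hlt' : (n : ℝ) ^ 2 < 4 * (a * b) + ((k : ℝ) - 1) ^ 2 := by
    rw [← hcast]
    exact_mod_cast hlt
  set d : ℝ := (k : ℝ) - 1 with hd
  have hd0 : 0 < d := by
    have hk1 : (3 : ℝ) ≤ k := by exact_mod_cast hk
    linarith
  have hsq := Real.sq_sqrt (show (0 : ℝ) ≤ a * b + d ^ 2 / 4 by positivity)
  have hgt : (n : ℝ) / 2 < √(a * b + d ^ 2 / 4) := by
    apply Real.lt_sqrt_of_sq_lt
    nlinarith
  have hn0 : (0 : ℝ) ≤ n := Nat.cast_nonneg n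
  have hlow := lam_lower_s12 H A (k - 1) (by rw [hAc]; nlinarith) hAB hB hAd
    (d / 2 + √(a * b + d ^ 2 / 4)) (by linarith) (by
      rw [hcast, hAc, hBc]
      nlinarith)
  have := hG.2 H hW
  linarith
end
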